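/- arXiv:1404.6563 — 16 statements merged into one kernel-verified Lean document; each statement's English description precedes it below -/
import Mathlib

section
/- Let (H,I,J) be an M-feasible partition with M > 0. Then the memory shares are valid: (1) α_i ≥ 0 for every level i ∈ {1,…,L}; (2) Σ_{i=1}^{L} α_i·M = M (equivalently Σ_i α_i = 1); and (3) α_i·M ≤ N_i/d_i for every level i. -/
/-!
Multiplying the two bounds on `M̃` that define `I` by `√(N_i U_i)`, and using
`√(N_i U_i) · √(N_i / U_i) = N_i`, turns them into `N_i / K ≤ √(N_i U_i) M̃ ≤ N_i / d_i + N_i / K`,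
which is exactly `0 ≤ α_i M ≤ N_i / d_i`; on `H` and `J` these bounds are immediate. The shares sum
to `S_I M̃ - V_I + T_J`, and this equals `M` by the definition of `M̃`, since `S_I > 0`.
-/

open Finset

/-- The level-separation factor β = 1/198. -/
noncomputable def βls : ℝ := 1 / 198

/-- S_A = Σ_{i∈A} √(N_i·U_i). -/
noncomputable def Ssum {L : ℕ} (N U : Fin L → ℝ) (A : Finset (Fin L)) : ℝ :=
  ∑ i ∈ A, Real.sqrt (N i * U i)

/-- T_A = Σ_{i∈A} N_i/d_i. -/
noncomputable def Tsum {L : ℕ} (N : Fin L → ℝ) (d : Fin L → ℕ) (A : Finset (Fin L)) : ℝ :=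
  ∑ i ∈ A, N i / (d i : ℝ)

/-- V_A = Σ_{i∈A} N_i/K. -/
noncomputable def Vsum {L : ℕ} (N : Fin L → ℝ) (K : ℕ) (A : Finset (Fin L)) : ℝ :=
  ∑ i ∈ A, N i / (K : ℝ)

/-- M̃ = (M − T_J + V_I)/S_I. -/
noncomputable def Mtilde {L : ℕ} (N U : Fin L → ℝ) (d : Fin L → ℕ) (K : ℕ) (M : ℝ)
    (I J : Finset (Fin L)) : ℝ :=
  (M - Tsum N d J + Vsum N K I) / Ssum N U I

/-- An M-feasible partition (H,I,J) of the set of levels {1,…,L}. -/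
structure MFeasible {L : ℕ} (N U : Fin L → ℝ) (d : Fin L → ℕ) (K : ℕ) (M : ℝ)
    (H I J : Finset (Fin L)) : Prop where
  disjHI : Disjoint H I
  disjHJ : Disjoint H J
  disjIJ : Disjoint I J
  cover : H ∪ I ∪ J = Finset.univ
  Inonempty : I.Nonempty
  memH : ∀ h ∈ H, Mtilde N U d K M I J < (1 / (K : ℝ)) * Real.sqrt (N h / U h)
  memIlo : ∀ i ∈ I, (1 / (K : ℝ)) * Real.sqrt (N i / U i) ≤ Mtilde N U d K M I J
  memIhi : ∀ i ∈ I,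
    Mtilde N U d K M I J ≤ (1 / (d i : ℝ) + 1 / (K : ℝ)) * Real.sqrt (N i / U i)
  memJ : ∀ j ∈ J, (1 / (d j : ℝ) + 1 / (K : ℝ)) * Real.sqrt (N j / U j) < Mtilde N U d K M I J

/-- The memory share α_i·M of level i under the partition (H,I,J). -/
noncomputable def alphaM {L : ℕ} (N U : Fin L → ℝ) (d : Fin L → ℕ) (K : ℕ) (M : ℝ)
    (H I J : Finset (Fin L)) (i : Fin L) : ℝ :=
  if i ∈ H then 0
  else if i ∈ I then Real.sqrt (N i * U i) * Mtilde N U d K M I J - N i / (K : ℝ)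
  else N i / (d i : ℝ)

lemma sqrt_mul_mul_sqrt_div {a b : ℝ} (ha : 0 < a) (hb : 0 < b) :
    Real.sqrt (a * b) * Real.sqrt (a / b) = a := by
  rw [← Real.sqrt_mul (by positivity), show a * b * (a / b) = a ^ 2 by field_simp,
    Real.sqrt_sq ha.le]

/-- validity of the memory shares of an M-feasible partition. -/
theorem memory_shares_valid
    (L K : ℕ) (hK : 1 ≤ K)
    (N U : Fin L → ℝ) (hN : ∀ i, 0 < N i) (hU : ∀ i, 0 < U i)
    (d : Fin L → ℕ) (hd1 : ∀ i, 1 ≤ d i) (hdK : ∀ i, d i ≤ K)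
    (M : ℝ) (hM : 0 < M)
    (H I J : Finset (Fin L)) (hfeas : MFeasible N U d K M H I J) :
    (∀ i, 0 ≤ alphaM N U d K M H I J i) ∧
    (∑ i, alphaM N U d K M H I J i) = M ∧
    (∀ i, alphaM N U d K M H I J i ≤ N i / (d i : ℝ)) := by
  have hdiv : ∀ i, 0 ≤ N i / (d i : ℝ) := fun i => div_nonneg (hN i).le (Nat.cast_nonneg _)
  have hI : ∀ i ∈ I, 0 ≤ Real.sqrt (N i * U i) * Mtilde N U d K M I J - N i / (K : ℝ) ∧
      Real.sqrt (N i * U i) * Mtilde N U d K M I J - N i / (K : ℝ) ≤ N i / (d i : ℝ) := by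
    intro i hi
    have hs := sqrt_mul_mul_sqrt_div (hN i) (hU i)
    have hlo := mul_le_mul_of_nonneg_left (hfeas.memIlo i hi) (Real.sqrt_nonneg (N i * U i))
    have hhi := mul_le_mul_of_nonneg_left (hfeas.memIhi i hi) (Real.sqrt_nonneg (N i * U i))
    rw [mul_left_comm, hs] at hlo hhi
    constructor
    · linarith [show 1 / (K : ℝ) * N i = N i / K by ring]
    · linarith [show (1 / (d i : ℝ) + 1 / (K : ℝ)) * N i = N i / d i + N i / K by ring]
  refine ⟨fun i => ?_, ?_, fun i => ?_⟩
  · unfold alphaM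
    split_ifs with h1 h2
    exacts [le_rfl, (hI i h2).1, hdiv i]
  · have hS : 0 < Ssum N U I :=
      Finset.sum_pos (fun i _ => Real.sqrt_pos.2 (mul_pos (hN i) (hU i))) hfeas.Inonempty
    have sumH : ∑ i ∈ H, alphaM N U d K M H I J i = 0 :=
      Finset.sum_eq_zero fun i hi => by simp [alphaM, hi]
    have sumI : ∑ i ∈ I, alphaM N U d K M H I J i =
        Ssum N U I * Mtilde N U d K M I J - Vsum N K I := by
      rw [Ssum, Vsum, Finset.sum_mul, ← Finset.sum_sub_distrib]
      refine Finset.sum_congr rfl fun i hi => ?_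
      simp [alphaM, hi, Finset.disjoint_right.1 hfeas.disjHI hi]
    have sumJ : ∑ i ∈ J, alphaM N U d K M H I J i = Tsum N d J := by
      refine Finset.sum_congr rfl fun i hi => ?_
      simp [alphaM, Finset.disjoint_right.1 hfeas.disjHJ hi,
        Finset.disjoint_right.1 hfeas.disjIJ hi]
    have hM' : Ssum N U I * Mtilde N U d K M I J = M - Tsum N d J + Vsum N K I :=
      mul_div_cancel₀ _ hS.ne'
    rw [← hfeas.cover, Finset.sum_union (Finset.disjoint_union_left.2 ⟨hfeas.disjHJ, hfeas.disjIJ⟩),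
      Finset.sum_union hfeas.disjHI, sumH, sumI, sumJ, hM']
    ring
  · unfold alphaM
    split_ifs with h1 h2
    exacts [hdiv i, (hI i h2).2, le_rfl]
end

section
/- Assume regularity conditions (R1) and (R2). Then for every memory value M with 0 ≤ M ≤ Σ_{i=1}^{L} N_i/d_i there exists an M-feasible partition (H,I,J) of {1,…,L}; in particular its middle set I is nonempty. -/
/-!
Reading `x` as a water level, level `i` stores the amount
`fill x i = max 0 (min (N i / d i) (x * √(N i * U i) - N i / K))`. It vanishes up to the lower
threshold `(1/K) * √(N i / U i)`, equals `N i / d i` from the upper threshold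
`(1/d i + 1/K) * √(N i / U i)` on, and is affine in between, because
`√(N i / U i) * √(N i * U i) = N i`.

The total `∑ i, fill x i` is continuous in `x` and runs from `0` to `∑ i, N i / d i`, so it takes the
value `M` at some `x`. Let `H`, `I`, `J` be the levels below, inside and above their threshold
intervals at `x`; the equation `∑ i, fill x i = M` says `M = T_J + x * S_I - V_I`, that is, `M̃ = x`
as soon as `I` is nonempty (`feasible_of_fill`). If `I` is empty, the total is locally constant: `x`
is moved down to the largest upper threshold of a level in `J`, or, if `J` is empty, up to the
smallest lower threshold. No `fill x i` changes, and the level attaining the extremum enters `I`.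
-/

open Finset

namespace WaterFilling

variable {L : ℕ}

/-- Lower threshold of level `i`: below it the level stores nothing. -/
noncomputable def lo (N U : Fin L → ℝ) (K : ℕ) (i : Fin L) : ℝ :=
  (1 / (K : ℝ)) * Real.sqrt (N i / U i)

/-- Upper threshold of level `i`: above it the level is stored in full. -/
noncomputable def hi (N U : Fin L → ℝ) (d : Fin L → ℕ) (K : ℕ) (i : Fin L) : ℝ :=
  (1 / (d i : ℝ) + 1 / (K : ℝ)) * Real.sqrt (N i / U i)

/-- Memory given to level `i` at water level `x`. -/
noncomputable def fill (N U : Fin L → ℝ) (d : Fin L → ℕ) (K : ℕ) (x : ℝ) (i : Fin L) : ℝ :=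
  max 0 (min (N i / (d i : ℝ)) (x * Real.sqrt (N i * U i) - N i / (K : ℝ)))

variable {N U : Fin L → ℝ} {d : Fin L → ℕ} {K : ℕ}

lemma sqrt_div_mul_sqrt_mul (hN : ∀ i, 0 < N i) (hU : ∀ i, 0 < U i) (i : Fin L) :
    Real.sqrt (N i / U i) * Real.sqrt (N i * U i) = N i := by
  have h1 := hN i
  have h2 := hU i
  rw [← Real.sqrt_mul (by positivity), show N i / U i * (N i * U i) = N i ^ 2 by field_simp,
    Real.sqrt_sq h1.le]

lemma lo_mul (hN : ∀ i, 0 < N i) (hU : ∀ i, 0 < U i) (i : Fin L) :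
    lo N U K i * Real.sqrt (N i * U i) = N i / K := by
  rw [lo, mul_assoc, sqrt_div_mul_sqrt_mul hN hU]
  ring

lemma hi_mul (hN : ∀ i, 0 < N i) (hU : ∀ i, 0 < U i) (i : Fin L) :
    hi N U d K i * Real.sqrt (N i * U i) = N i / d i + N i / K := by
  rw [hi, mul_assoc, sqrt_div_mul_sqrt_mul hN hU]
  ring

lemma lo_nonneg (i : Fin L) : 0 ≤ lo N U K i := by
  unfold lo
  positivity

lemma lo_le_hi (i : Fin L) : lo N U K i ≤ hi N U d K i := by
  unfold lo hi
  gcongr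
  have : (0 : ℝ) ≤ 1 / d i := by positivity
  linarith

lemma fill_of_le_lo (hN : ∀ i, 0 < N i) (hU : ∀ i, 0 < U i) {x : ℝ} {i : Fin L}
    (h : x ≤ lo N U K i) : fill N U d K x i = 0 := by
  have h1 := mul_le_mul_of_nonneg_right h (Real.sqrt_nonneg (N i * U i))
  rw [lo_mul hN hU] at h1
  exact max_eq_left ((min_le_right _ _).trans (by linarith))

lemma fill_of_hi_le (hN : ∀ i, 0 < N i) (hU : ∀ i, 0 < U i) {x : ℝ} {i : Fin L}
    (h : hi N U d K i ≤ x) : fill N U d K x i = N i / d i := by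
  have h1 := mul_le_mul_of_nonneg_right h (Real.sqrt_nonneg (N i * U i))
  rw [hi_mul hN hU] at h1
  have h2 : 0 ≤ N i / (d i : ℝ) := div_nonneg (hN i).le (Nat.cast_nonneg _)
  rw [fill, min_eq_left (by linarith), max_eq_right h2]

lemma fill_of_mem (hN : ∀ i, 0 < N i) (hU : ∀ i, 0 < U i) {x : ℝ} {i : Fin L}
    (h : lo N U K i ≤ x) (h' : x ≤ hi N U d K i) :
    fill N U d K x i = x * Real.sqrt (N i * U i) - N i / K := by
  have h1 := mul_le_mul_of_nonneg_right h (Real.sqrt_nonneg (N i * U i))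
  have h2 := mul_le_mul_of_nonneg_right h' (Real.sqrt_nonneg (N i * U i))
  rw [lo_mul hN hU] at h1
  rw [hi_mul hN hU] at h2
  rw [fill, min_eq_right (by linarith), max_eq_right (by linarith)]

/-- If the water level `x` uses exactly the memory `M` and lies between the thresholds of some level,
then sorting the levels by their position relative to `x` is feasible, with `M̃ = x`. -/
lemma feasible_of_fill (hN : ∀ i, 0 < N i) (hU : ∀ i, 0 < U i) {M x : ℝ}
    (hM : ∑ i, fill N U d K x i = M)
    (hx : ∃ i, lo N U K i ≤ x ∧ x ≤ hi N U d K i) :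
    ∃ H I J : Finset (Fin L), MFeasible N U d K M H I J := by
  classical
  set H : Finset (Fin L) := univ.filter fun i => x < lo N U K i with hH
  set I : Finset (Fin L) := univ.filter fun i => lo N U K i ≤ x ∧ x ≤ hi N U d K i with hI
  set J : Finset (Fin L) := univ.filter fun i => hi N U d K i < x with hJ
  have hIne : I.Nonempty := by
    obtain ⟨i, hi⟩ := hx
    exact ⟨i, by simpa [hI] using hi⟩
  have dHI : Disjoint H I := by
    rw [disjoint_left]
    intro i h1 h2
    simp only [hH, hI, mem_filter, mem_univ, true_and] at h1 h2
    linarith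
  have dHJ : Disjoint H J := by
    rw [disjoint_left]
    intro i h1 h2
    simp only [hH, hJ, mem_filter, mem_univ, true_and] at h1 h2
    linarith [lo_le_hi (N := N) (U := U) (d := d) (K := K) i]
  have dIJ : Disjoint I J := by
    rw [disjoint_left]
    intro i h1 h2
    simp only [hI, hJ, mem_filter, mem_univ, true_and] at h1 h2
    linarith
  have cov : H ∪ I ∪ J = univ := by
    ext i
    simp only [hH, hI, hJ, mem_union, mem_filter, mem_univ, true_and, iff_true]
    rcases lt_or_ge x (lo N U K i) with h | h
    · exact Or.inl (Or.inl h)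
    · rcases lt_or_ge (hi N U d K i) x with h' | h'
      · exact Or.inr h'
      · exact Or.inl (Or.inr ⟨h, h'⟩)
  have hS : 0 < Ssum N U I :=
    sum_pos (fun i _ => Real.sqrt_pos.2 (mul_pos (hN i) (hU i))) hIne
  have sumH : ∑ i ∈ H, fill N U d K x i = 0 :=
    sum_eq_zero fun i h => fill_of_le_lo hN hU (mem_filter.1 h).2.le
  have sumI : ∑ i ∈ I, fill N U d K x i = x * Ssum N U I - Vsum N K I := by
    rw [Ssum, Vsum, mul_sum, ← sum_sub_distrib]
    exact sum_congr rfl fun i h => fill_of_mem hN hU (mem_filter.1 h).2.1 (mem_filter.1 h).2.2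
  have sumJ : ∑ i ∈ J, fill N U d K x i = Tsum N d J :=
    sum_congr rfl fun i h => fill_of_hi_le hN hU (mem_filter.1 h).2.le
  have hMt : Mtilde N U d K M I J = x := by
    rw [← cov, sum_union (disjoint_union_left.2 ⟨dHJ, dIJ⟩), sum_union dHI, sumH, sumI, sumJ] at hM
    rw [Mtilde, div_eq_iff hS.ne']
    linarith
  refine ⟨H, I, J, dHI, dHJ, dIJ, cov, hIne, ?_, ?_, ?_, ?_⟩
  · intro i h
    rw [hMt]
    exact (mem_filter.1 h).2
  · intro i h
    rw [hMt]
    exact (mem_filter.1 h).2.1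
  · intro i h
    rw [hMt]
    exact (mem_filter.1 h).2.2
  · intro i h
    rw [hMt]
    exact (mem_filter.1 h).2

lemma exists_fill_eq (hN : ∀ i, 0 < N i) (hU : ∀ i, 0 < U i) {M : ℝ} (hM0 : 0 ≤ M)
    (hM1 : M ≤ ∑ i, N i / (d i : ℝ)) : ∃ x, ∑ i, fill N U d K x i = M := by
  have hi0 (i : Fin L) : 0 ≤ hi N U d K i := (lo_nonneg i).trans (lo_le_hi i)
  have hcont : Continuous fun x => ∑ i, fill N U d K x i := by
    unfold fill
    fun_prop
  have h0 : ∑ i, fill N U d K 0 i = 0 :=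
    sum_eq_zero fun i _ => fill_of_le_lo hN hU (lo_nonneg i)
  -- The sum of all upper thresholds is a convenient bound for each of them.
  have h1 : ∑ i, fill N U d K (∑ j, hi N U d K j) i = ∑ i, N i / (d i : ℝ) :=
    sum_congr rfl fun i _ =>
      fill_of_hi_le hN hU (single_le_sum (fun j _ => hi0 j) (mem_univ i))
  obtain ⟨x, -, hx⟩ := intermediate_value_Icc (sum_nonneg fun j _ => hi0 j) hcont.continuousOn
    (show M ∈ Set.Icc _ _ from ⟨h0.trans_le hM0, hM1.trans_eq h1.symm⟩)
  exact ⟨x, hx⟩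

/-- The water level can be moved so that it meets the threshold interval of some level, without
changing the memory used. -/
lemma exists_fill_eq_mem (hL : 1 ≤ L) (hN : ∀ i, 0 < N i) (hU : ∀ i, 0 < U i) (x : ℝ) :
    ∃ y, ∑ i, fill N U d K y i = ∑ i, fill N U d K x i ∧
      ∃ i, lo N U K i ≤ y ∧ y ≤ hi N U d K i := by
  by_cases hx : ∃ i, lo N U K i ≤ x ∧ x ≤ hi N U d K i
  · exact ⟨x, rfl, hx⟩
  push Not at hx
  by_cases hJ : (univ.filter fun i => hi N U d K i < x).Nonempty
  · obtain ⟨m, hm, hmax⟩ := exists_max_image _ (hi N U d K) hJ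
    have hmx : hi N U d K m < x := (mem_filter.1 hm).2
    refine ⟨hi N U d K m, sum_congr rfl fun i _ => ?_, m, lo_le_hi m, le_rfl⟩
    rcases lt_or_ge x (lo N U K i) with h | h
    · rw [fill_of_le_lo hN hU h.le, fill_of_le_lo hN hU (hmx.trans h).le]
    · have hix := hx i h
      rw [fill_of_hi_le hN hU hix.le,
        fill_of_hi_le hN hU (hmax i (mem_filter.2 ⟨mem_univ i, hix⟩))]
  · have hlow (i : Fin L) : x < lo N U K i := by
      by_contra! h
      exact hJ ⟨i, mem_filter.2 ⟨mem_univ i, hx i h⟩⟩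
    obtain ⟨m, -, hmin⟩ := exists_min_image univ (lo N U K) ⟨⟨0, hL⟩, mem_univ _⟩
    refine ⟨lo N U K m, sum_congr rfl fun i _ => ?_, m, le_rfl, lo_le_hi m⟩
    rw [fill_of_le_lo hN hU (hlow i).le, fill_of_le_lo hN hU (hmin i (mem_univ i))]

end WaterFilling

/-- existence of an M-feasible partition under the regularity conditions. -/
theorem mFeasible_exists
    (L K : ℕ) (hL : 1 ≤ L) (hK : 1 ≤ K)
    (N U : Fin L → ℝ) (hN : ∀ i, 0 < N i) (hU : ∀ i, 0 < U i)
    (d : Fin L → ℕ) (hd1 : ∀ i, 1 ≤ d i) (hdK : ∀ i, d i ≤ K)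
    (D : ℕ) (hD : D = Finset.univ.sup d)
    (hR1 : ∀ i, N i ≥ (K : ℝ) * U i)
    (hR2 : ∀ i j : Fin L, U i / N i > U j / N j →
      Real.sqrt ((U i / N i) / (U j / N j)) ≥ (D : ℝ) / βls)
    (M : ℝ) (hM0 : 0 ≤ M) (hM1 : M ≤ ∑ i, N i / (d i : ℝ)) :
    ∃ H I J : Finset (Fin L), MFeasible N U d K M H I J := by
  obtain ⟨x, hx⟩ := WaterFilling.exists_fill_eq (K := K) hN hU hM0 hM1
  obtain ⟨y, hy, hmem⟩ := WaterFilling.exists_fill_eq_mem (d := d) (K := K) hL hN hU x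
  exact WaterFilling.feasible_of_fill hN hU (hy.trans hx) hmem
end

section
/- Let (H,I,J) be an M-feasible partition with J = ∅, and let p be a level of maximal popularity, i.e. U_p/N_p ≥ U_i/N_i for every level i ∈ {1,…,L}. Then p ∈ I. -/
/-! If `p ∉ I`, then `p ∈ H` because `J = ∅`, so `M̃ < (1/K)√(N_p/U_p)`. For any `i ∈ I`, maximal
popularity of `p` gives `N_p/U_p ≤ N_i/U_i`, hence `(1/K)√(N_p/U_p) ≤ (1/K)√(N_i/U_i) ≤ M̃`,
a contradiction. -/

open Finset

/-- if J = ∅, a most popular level belongs to I. -/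
theorem most_popular_mem_I_of_J_empty
    (L K : ℕ) (hK : 1 ≤ K)
    (N U : Fin L → ℝ) (hN : ∀ i, 0 < N i) (hU : ∀ i, 0 < U i)
    (d : Fin L → ℕ) (hd1 : ∀ i, 1 ≤ d i) (hdK : ∀ i, d i ≤ K)
    (M : ℝ) (hM : 0 ≤ M)
    (H I J : Finset (Fin L)) (hfeas : MFeasible N U d K M H I J)
    (hJ : J = ∅)
    (p : Fin L) (hp : ∀ i, U i / N i ≤ U p / N p) :
    p ∈ I := by
  by_contra hpI
  have hpH : p ∈ H := by
    have h := Finset.mem_univ p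
    rw [← hfeas.cover] at h
    simpa [hJ, hpI] using h
  obtain ⟨i, hi⟩ := hfeas.Inonempty
  have hNU : N p / U p ≤ N i / U i := by
    rw [← inv_div (U p), ← inv_div (U i)]
    exact inv_anti₀ (div_pos (hU i) (hN i)) (hp i)
  have hle : (1 / (K : ℝ)) * Real.sqrt (N p / U p) ≤ (1 / (K : ℝ)) * Real.sqrt (N i / U i) := by
    gcongr
  exact absurd (hfeas.memH p hpH) (not_lt.mpr (hle.trans (hfeas.memIlo i hi)))
end

section
/- Let (H,I,J) be an M-feasible partition with M > 0, and let i ∈ I satisfy M̃ ≥ (2/K)·√(N_i/U_i). Then, writing a = α_i·M = √(N_i·U_i)·M̃ − N_i/K (which satisfies 0 < a ≤ N_i/d_i), the single-level rate expression is bounded as U_i · min{ N_i/a , K } · (1 − d_i·a/N_i) ≤ 2·S_I·√(N_i·U_i)/(M − T_J + V_I). -/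
/-!
Write `s = √(N_i U_i)`, `r = √(N_i / U_i)`, so `s * r = N_i` and `s ^ 2 = N_i U_i`.
Multiplying the hypothesis `M̃ ≥ 2 r / K` by `s` gives `s M̃ ≥ 2 N_i / K`, so that
`a = s M̃ - N_i / K ≥ s M̃ / 2 > 0`; multiplying `M̃ ≤ (1 / d_i + 1 / K) r` by `s` gives
`a ≤ N_i / d_i`. Since `1 - d_i a / N_i ≤ 1`, the rate is at most
`U_i N_i / a ≤ 2 s ^ 2 / (s M̃) = 2 s / M̃`, which is the right-hand side by definition of `M̃`.
-/

open Finset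

/-- rate bound for levels i ∈ I with M̃ ≥ (2/K)·√(N_i/U_i) (the set I'). -/
theorem rate_bound_Imid
    (L K : ℕ) (hK : 1 ≤ K)
    (N U : Fin L → ℝ) (hN : ∀ i, 0 < N i) (hU : ∀ i, 0 < U i)
    (d : Fin L → ℕ) (hd1 : ∀ i, 1 ≤ d i) (hdK : ∀ i, d i ≤ K)
    (M : ℝ) (hM : 0 < M)
    (H I J : Finset (Fin L)) (hfeas : MFeasible N U d K M H I J)
    (i : Fin L) (hi : i ∈ I)
    (hge : (2 / (K : ℝ)) * Real.sqrt (N i / U i) ≤ Mtilde N U d K M I J) :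
    (0 < Real.sqrt (N i * U i) * Mtilde N U d K M I J - N i / (K : ℝ)) ∧
    (Real.sqrt (N i * U i) * Mtilde N U d K M I J - N i / (K : ℝ) ≤ N i / (d i : ℝ)) ∧
    U i * min (N i / (Real.sqrt (N i * U i) * Mtilde N U d K M I J - N i / (K : ℝ))) (K : ℝ) *
        (1 - (d i : ℝ) * (Real.sqrt (N i * U i) * Mtilde N U d K M I J - N i / (K : ℝ)) / N i)
      ≤ 2 * Ssum N U I * Real.sqrt (N i * U i) / (M - Tsum N d J + Vsum N K I) := by
  have hNi := hN i
  have hUi := hU i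
  have hKpos : (0 : ℝ) < K := by exact_mod_cast hK
  have hdpos : (0 : ℝ) < d i := by exact_mod_cast hd1 i
  have hspos : 0 < Real.sqrt (N i * U i) := Real.sqrt_pos.mpr (mul_pos hNi hUi)
  have hrpos : 0 < Real.sqrt (N i / U i) := Real.sqrt_pos.mpr (div_pos hNi hUi)
  have hss : Real.sqrt (N i * U i) * Real.sqrt (N i * U i) = N i * U i :=
    Real.mul_self_sqrt (mul_pos hNi hUi).le
  have hsr : Real.sqrt (N i * U i) * Real.sqrt (N i / U i) = N i := by
    rw [← Real.sqrt_mul (mul_pos hNi hUi).le,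
      show N i * U i * (N i / U i) = N i * N i by field_simp, Real.sqrt_mul_self hNi.le]
  have hSpos : 0 < Ssum N U I :=
    Finset.sum_pos (fun j _ => Real.sqrt_pos.mpr (mul_pos (hN j) (hU j))) hfeas.Inonempty
  have hmpos : 0 < Mtilde N U d K M I J := lt_of_lt_of_le (by positivity) hge
  have hhi := hfeas.memIhi i hi
  have hden : M - Tsum N d J + Vsum N K I = Mtilde N U d K M I J * Ssum N U I := by
    rw [Mtilde, div_mul_cancel₀ _ hSpos.ne']
  rw [hden]
  generalize Mtilde N U d K M I J = m at *
  generalize Real.sqrt (N i * U i) = s at *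
  generalize Real.sqrt (N i / U i) = r at *
  have hlo : 2 * (N i / K) ≤ s * m := by
    calc 2 * (N i / K) = s * (2 / K * r) := by rw [← hsr]; ring
      _ ≤ s * m := by gcongr
  have hup : s * m ≤ N i / d i + N i / K := by
    calc s * m ≤ s * ((1 / d i + 1 / K) * r) := by gcongr
      _ = s * r / d i + s * r / K := by ring
      _ = N i / d i + N i / K := by rw [hsr]
  have hsm : 0 < s * m := mul_pos hspos hmpos
  obtain ⟨a, ha⟩ : ∃ a, a = s * m - N i / K := ⟨_, rfl⟩
  rw [← ha]
  have hhalf : s * m / 2 ≤ a := by linarith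
  have hapos : 0 < a := by linarith
  have hale : a ≤ N i / d i := by linarith
  refine ⟨hapos, hale, ?_⟩
  have hfac : 1 - d i * a / N i ≤ 1 := by
    have : 0 ≤ d i * a / N i := by positivity
    linarith
  calc U i * min (N i / a) (K : ℝ) * (1 - d i * a / N i)
      ≤ U i * min (N i / a) (K : ℝ) * 1 := by
        have : 0 ≤ min (N i / a) (K : ℝ) := le_min (by positivity) hKpos.le
        gcongr
    _ ≤ U i * (N i / a) := by
        rw [mul_one]
        gcongr
        exact min_le_left _ _
    _ ≤ U i * (N i / (s * m / 2)) := by gcongr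
    _ = 2 * (N i * U i) / (s * m) := by field_simp
    _ = 2 * Ssum N U I * s / (m * Ssum N U I) := by
        rw [← hss]
        field_simp
end

section
/- Let (H,I,J) be an M-feasible partition and let i₁ ∈ I satisfy U_i/N_i ≤ U_{i₁}/N_{i₁} for every i ∈ I. Then, writing a = α_{i₁}·M = √(N_{i₁}·U_{i₁})·M̃ − N_{i₁}/K, the difference Δ = (1 − a/(N_{i₁}/d_{i₁})) − (1 − (M − T_J)/(N_{i₁}/d_{i₁})) satisfies Δ ≤ S_{I∖{i₁}} / √(N_{i₁}·U_{i₁}). -/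
/-!
Write `S' = S_{I∖{i₁}}`, `V' = V_{I∖{i₁}}` and `r = √(N_{i₁}/U_{i₁})`, so that
`√(N_{i₁} U_{i₁}) · r = N_{i₁}`. The definition of `M̃` reads `M − T_J = S_I M̃ − V_I`; removing the
contribution of `i₁` gives `Δ · N_{i₁}/d_{i₁} = S' M̃ − V'`. Feasibility bounds
`M̃ ≤ (1/d_{i₁} + 1/K) r`, and the maximality of `U_{i₁}/N_{i₁}` gives `S' r / K ≤ V'`
(`Ssum_mul_le_Vsum`), so the `1/K` terms drop out and `Δ · N_{i₁}/d_{i₁} ≤ S' r / d_{i₁}`,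
which is the claim.
-/

open Finset

lemma sqrt_mul_sqrt_div {x y : ℝ} (hx : 0 < x) (hy : 0 < y) :
    Real.sqrt (x * y) * Real.sqrt (x / y) = x := by
  rw [← Real.sqrt_mul (by positivity), show x * y * (x / y) = x ^ 2 by field_simp,
    Real.sqrt_sq hx.le]

/-- If `i1` is at least as popular per file as every level of `A`, then each `i ∈ A` satisfies
`√(N_i U_i) · √(N_{i1}/U_{i1}) ≤ √(N_i U_i) · √(N_i/U_i) = N_i`; the bound is the
sum of these, divided by `K`. -/
lemma Ssum_mul_le_Vsum {L : ℕ} (K : ℕ) (N U : Fin L → ℝ) (hN : ∀ i, 0 < N i)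
    (hU : ∀ i, 0 < U i) (i1 : Fin L) (A : Finset (Fin L))
    (hmax : ∀ i ∈ A, U i / N i ≤ U i1 / N i1) :
    Ssum N U A * (Real.sqrt (N i1 / U i1) / K) ≤ Vsum N K A := by
  unfold Ssum Vsum
  rw [Finset.sum_mul]
  refine Finset.sum_le_sum fun i hi => ?_
  have hratio : N i1 / U i1 ≤ N i / U i := by
    rw [← inv_div (U i1), ← inv_div (U i)]
    exact inv_anti₀ (div_pos (hU i) (hN i)) (hmax i hi)
  rw [← mul_div_assoc]
  gcongr
  calc Real.sqrt (N i * U i) * Real.sqrt (N i1 / U i1)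
      ≤ Real.sqrt (N i * U i) * Real.sqrt (N i / U i) := by gcongr
    _ = N i := sqrt_mul_sqrt_div (hN i) (hU i)

/-- the bound on the difference Δ for the most popular level i₁ of I. -/
theorem delta_bound
    (L K : ℕ) (hK : 1 ≤ K)
    (N U : Fin L → ℝ) (hN : ∀ i, 0 < N i) (hU : ∀ i, 0 < U i)
    (d : Fin L → ℕ) (hd1 : ∀ i, 1 ≤ d i) (hdK : ∀ i, d i ≤ K)
    (M : ℝ) (hM : 0 ≤ M)
    (H I J : Finset (Fin L)) (hfeas : MFeasible N U d K M H I J)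
    (i1 : Fin L) (hi1 : i1 ∈ I)
    (hmax : ∀ i ∈ I, U i / N i ≤ U i1 / N i1) :
    (1 - (Real.sqrt (N i1 * U i1) * Mtilde N U d K M I J - N i1 / (K : ℝ)) /
        (N i1 / (d i1 : ℝ))) -
      (1 - (M - Tsum N d J) / (N i1 / (d i1 : ℝ)))
      ≤ Ssum N U (I.erase i1) / Real.sqrt (N i1 * U i1) := by
  have hKpos : (0 : ℝ) < K := by exact_mod_cast hK
  have hdpos : (0 : ℝ) < d i1 := by exact_mod_cast hd1 i1
  have hN1 := hN i1
  have hs1 : 0 < Real.sqrt (N i1 * U i1) := Real.sqrt_pos.2 (mul_pos hN1 (hU i1))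
  have hS' : 0 ≤ Ssum N U (I.erase i1) := Finset.sum_nonneg fun i _ => Real.sqrt_nonneg _
  have hSsplit : Ssum N U I = Real.sqrt (N i1 * U i1) + Ssum N U (I.erase i1) :=
    (Finset.add_sum_erase I (fun i => Real.sqrt (N i * U i)) hi1).symm
  have hVsplit : Vsum N K I = N i1 / K + Vsum N K (I.erase i1) :=
    (Finset.add_sum_erase I (fun i => N i / (K : ℝ)) hi1).symm
  have hbudget : Mtilde N U d K M I J * Ssum N U I = M - Tsum N d J + Vsum N K I :=
    div_mul_cancel₀ _ (by rw [hSsplit]; positivity)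
  have hr1 := sqrt_mul_sqrt_div hN1 (hU i1)
  have hV := Ssum_mul_le_Vsum K N U hN hU i1 (I.erase i1)
    fun i hi => hmax i (Finset.mem_of_mem_erase hi)
  have hhi := mul_le_mul_of_nonneg_left (hfeas.memIhi i1 hi1) hS'
  set r := Real.sqrt (N i1 / U i1)
  set s := Real.sqrt (N i1 * U i1)
  set S' := Ssum N U (I.erase i1)
  set m := Mtilde N U d K M I J
  have hX : M - Tsum N d J - (s * m - N i1 / K) ≤ S' * r / d i1 := by
    rw [hSsplit, hVsplit] at hbudget
    have e : S' * ((1 / (d i1 : ℝ) + 1 / K) * r) = S' * r / d i1 + S' * (r / K) := by ring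
    linarith
  calc (1 - (s * m - N i1 / K) / (N i1 / d i1)) - (1 - (M - Tsum N d J) / (N i1 / d i1))
      = (M - Tsum N d J - (s * m - N i1 / K)) / (N i1 / d i1) := by ring
    _ ≤ (S' * r / d i1) / (N i1 / d i1) := by gcongr
    _ = S' / s := by
      rw [div_div_div_cancel_right₀ hdpos.ne', div_eq_div_iff hN1.ne' hs1.ne', ← hr1]
      ring
end

section
/- Let (H,I,J) be an M-feasible partition and let i₁ ∈ I satisfy both M̃ > (β/d_{i₁} + 1/K)·√(N_{i₁}/U_{i₁}) and U_i/N_i ≤ U_{i₁}/N_{i₁} for every i ∈ I. Then, writing a = α_{i₁}·M = √(N_{i₁}·U_{i₁})·M̃ − N_{i₁}/K, one has U_{i₁}·(N_{i₁}/a)·(1 − d_{i₁}·a/N_{i₁}) ≤ (1/β)·d_{i₁}·U_{i₁}·(1 − d_{i₁}·(M − T_J)/N_{i₁}) + (1/β)·d_{i₁}·U_{i₁}·S_{I∖{i₁}}/√(N_{i₁}·U_{i₁}). -/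
/-!
Write `a_i = √(N_i U_i)·M̃ − N_i/K`. Since `√(N/U)·√(NU) = N`, the two bounds on `M̃` at `i₁` say
`β N_{i₁}/d_{i₁} < a_{i₁} ≤ N_{i₁}/d_{i₁}`; hence the factor `1 − d a/N` is nonnegative and
`N/a` may be replaced by `d/β`. By the definition of `M̃`, `∑_{i ∈ I} a_i = M − T_J`, so it remains
to bound `∑_{i ∈ I ∖ {i₁}} a_i` by `(N_{i₁}/d_{i₁})·S_{I∖{i₁}}/√(N_{i₁} U_{i₁})`. This holds term by
term: insert the upper bound on `M̃` at `i₁`, and absorb the resulting `1/K` contribution into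
`N_i/K` using the maximality of `U_{i₁}/N_{i₁}` (`sqrt_mul_le_of_div_le`).
-/

open Finset

lemma sqrt_div_mul_sqrt_mul {n u : ℝ} (hn : 0 < n) (hu : 0 < u) :
    √(n / u) * √(n * u) = n := by
  rw [← Real.sqrt_mul (by positivity)]
  have : n / u * (n * u) = n ^ 2 := by field_simp
  rw [this, Real.sqrt_sq hn.le]

/-- The cross-multiplied form of `√(u / n) ≤ √(u' / n')`. -/
lemma sqrt_mul_le_of_div_le {n u n' u' : ℝ} (hn : 0 < n) (hn' : 0 < n')
    (h : u / n ≤ u' / n') : √(n * u) * n' ≤ n * √(n' * u') := by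
  have e1 : √(n * u) = n * √(u / n) := by
    have : n * u = n ^ 2 * (u / n) := by field_simp
    rw [this, Real.sqrt_mul (by positivity), Real.sqrt_sq hn.le]
  have e2 : √(n' * u') = n' * √(u' / n') := by
    have : n' * u' = n' ^ 2 * (u' / n') := by field_simp
    rw [this, Real.sqrt_mul (by positivity), Real.sqrt_sq hn'.le]
  rw [e1, e2]
  have := mul_le_mul_of_nonneg_left (Real.sqrt_le_sqrt h) (mul_pos hn hn').le
  linarith

/-- rate bound for the (unique) level i₁ ∈ I₁. -/
theorem rate_bound_I1
    (L K : ℕ) (hK : 1 ≤ K)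
    (N U : Fin L → ℝ) (hN : ∀ i, 0 < N i) (hU : ∀ i, 0 < U i)
    (d : Fin L → ℕ) (hd1 : ∀ i, 1 ≤ d i) (hdK : ∀ i, d i ≤ K)
    (M : ℝ) (hM : 0 ≤ M)
    (H I J : Finset (Fin L)) (hfeas : MFeasible N U d K M H I J)
    (i1 : Fin L) (hi1 : i1 ∈ I)
    (hI1 : Mtilde N U d K M I J >
      (βls / (d i1 : ℝ) + 1 / (K : ℝ)) * Real.sqrt (N i1 / U i1))
    (hmax : ∀ i ∈ I, U i / N i ≤ U i1 / N i1) :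
    U i1 * (N i1 / (Real.sqrt (N i1 * U i1) * Mtilde N U d K M I J - N i1 / (K : ℝ))) *
        (1 - (d i1 : ℝ) *
          (Real.sqrt (N i1 * U i1) * Mtilde N U d K M I J - N i1 / (K : ℝ)) / N i1)
      ≤ (1 / βls) * (d i1 : ℝ) * U i1 * (1 - (d i1 : ℝ) * (M - Tsum N d J) / N i1) +
        (1 / βls) * (d i1 : ℝ) * U i1 * Ssum N U (I.erase i1) / Real.sqrt (N i1 * U i1) := by
  have hsI : 0 < Ssum N U I :=
    Finset.sum_pos (fun i _ => Real.sqrt_pos.2 (mul_pos (hN i) (hU i))) hfeas.Inonempty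
  have hbal : Mtilde N U d K M I J * Ssum N U I = M - Tsum N d J + Vsum N K I := by
    unfold Mtilde
    field_simp
  have hhi := hfeas.memIhi i1 hi1
  set m := Mtilde N U d K M I J
  have hn := hN i1
  have hu := hU i1
  have hs : 0 < √(N i1 * U i1) := Real.sqrt_pos.2 (mul_pos hn hu)
  have hqs := sqrt_div_mul_sqrt_mul hn hu
  have hD : (0 : ℝ) < d i1 := by exact_mod_cast hd1 i1
  have hK0 : (0 : ℝ) < K := by exact_mod_cast hK
  have hβ : 0 < βls := by norm_num [βls]
  have hSsplit : Ssum N U I = √(N i1 * U i1) + Ssum N U (I.erase i1) :=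
    (Finset.add_sum_erase I (fun i => √(N i * U i)) hi1).symm
  have hVsplit : Vsum N K I = N i1 / K + Vsum N K (I.erase i1) :=
    (Finset.add_sum_erase I (fun i => N i / (K : ℝ)) hi1).symm
  have hmhi : √(N i1 * U i1) * m ≤ (1 / d i1 + 1 / K) * N i1 := by
    have := mul_le_mul_of_nonneg_right hhi hs.le
    rw [mul_assoc, hqs] at this
    linarith
  have hmlo : (βls / d i1 + 1 / K) * N i1 < √(N i1 * U i1) * m := by
    have := mul_lt_mul_of_pos_right hI1 hs
    rw [mul_assoc, hqs] at this
    linarith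
  have hrest : Ssum N U (I.erase i1) * m - Vsum N K (I.erase i1)
      ≤ N i1 / d i1 * (Ssum N U (I.erase i1) / √(N i1 * U i1)) := by
    unfold Ssum Vsum
    rw [Finset.sum_mul, ← Finset.sum_sub_distrib, Finset.sum_div, Finset.mul_sum]
    refine Finset.sum_le_sum fun i hi => ?_
    have hcmp := sqrt_mul_le_of_div_le (hN i) hn (hmax i (Finset.mem_of_mem_erase hi))
    have hsi : 0 ≤ √(N i * U i) := Real.sqrt_nonneg _
    rw [← mul_div_assoc, le_div_iff₀ hs]
    have h1 := mul_le_mul_of_nonneg_left hmhi hsi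
    have h2 := mul_le_mul_of_nonneg_right hcmp (one_div_pos.2 hK0).le
    have e : √(N i * U i) * ((1 / d i1 + 1 / K) * N i1)
        = N i1 / d i1 * √(N i * U i) + √(N i * U i) * N i1 * (1 / K) := by ring
    have e' : (√(N i * U i) * m - N i / K) * √(N i1 * U i1)
        = √(N i * U i) * (√(N i1 * U i1) * m) - N i * √(N i1 * U i1) * (1 / K) := by ring
    linarith
  have hsum : M - Tsum N d J = (√(N i1 * U i1) * m - N i1 / K)
      + (Ssum N U (I.erase i1) * m - Vsum N K (I.erase i1)) := by
    rw [hSsplit, hVsplit] at hbal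
    linarith
  have halo : βls / d i1 * N i1 < √(N i1 * U i1) * m - N i1 / K := by
    have : (βls / d i1 + 1 / K) * N i1 = βls / d i1 * N i1 + N i1 / K := by ring
    linarith
  have hahi : √(N i1 * U i1) * m - N i1 / K ≤ N i1 / d i1 := by
    have : (1 / (d i1 : ℝ) + 1 / K) * N i1 = N i1 / d i1 + N i1 / K := by ring
    linarith
  set a := √(N i1 * U i1) * m - N i1 / K
  have hfac : 0 ≤ 1 - d i1 * a / N i1 := by
    rw [sub_nonneg, div_le_one hn]
    rw [le_div_iff₀ hD] at hahi
    linarith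
  have ha0 : 0 < a := lt_trans (by positivity) halo
  have hquot : N i1 / a ≤ 1 / βls * d i1 := by
    rw [div_le_iff₀ ha0]
    have := mul_le_mul_of_nonneg_left halo.le (by positivity : 0 ≤ 1 / βls * (d i1 : ℝ))
    have e : 1 / βls * (d i1 : ℝ) * (βls / d i1 * N i1) = N i1 := by field_simp
    linarith
  have hkey : 1 - d i1 * a / N i1 ≤ (1 - d i1 * (M - Tsum N d J) / N i1)
      + Ssum N U (I.erase i1) / √(N i1 * U i1) := by
    rw [hsum]
    have := mul_le_mul_of_nonneg_left hrest (by positivity : 0 ≤ (d i1 : ℝ) / N i1)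
    rw [← mul_assoc, show (d i1 : ℝ) / N i1 * (N i1 / d i1) = 1 by field_simp, one_mul] at this
    have e : ∀ x : ℝ, (d i1 : ℝ) * (a + x) / N i1 = d i1 * a / N i1 + d i1 / N i1 * x :=
      fun x => by ring
    rw [e]
    linarith
  calc U i1 * (N i1 / a) * (1 - d i1 * a / N i1)
      ≤ U i1 * (1 / βls * d i1) * (1 - d i1 * a / N i1) := by gcongr
    _ ≤ U i1 * (1 / βls * d i1) * ((1 - d i1 * (M - Tsum N d J) / N i1)
          + Ssum N U (I.erase i1) / √(N i1 * U i1)) := by gcongr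
    _ = _ := by ring
end

section
/- Assume regularity (R1), and assume the levels are ordered by decreasing popularity with separated popularities: for all levels i < j, √((U_i/N_i)/(U_j/N_j)) ≥ D/β. Let i* ∈ {1,…,L} and suppose the memory satisfies Σ_{i<i*} N_i/d_i ≤ M ≤ Σ_{i≤i*} N_i/d_i, and put T = Σ_{i<i*} N_i/d_i and b = ⌈N_{i*}/(d_{i*}·U_{i*})⌉. Then Σ_{i=1}^{L} min{ U_i , N_i/(d_i·b) } − M/b ≥ (1/2)·[ Σ_{h>i*} U_h + U_{i*}·(1 − d_{i*}·(M − T)/N_{i*}) ]. -/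
/-!
Write `x = N* / (d* U*)` for the ratio at the level `istar`. Condition (R1) and `d* ≤ K` give
`1 ≤ x`, hence `x ≤ b ≤ 2x`. Separation of the popularities (`level_gap`) determines every minimum:
it equals `N_i / (d_i b)` for `i ≤ istar` and `U_i` for `i > istar`. The left-hand side is therefore
`∑_{h > istar} U_h + (T + N*/d* - M) / b`, where the numerator is nonnegative by the upper bound on
`M`, and `1 / b ≥ 1 / (2x)` gives the claim.
-/

open Finset

/-- Separation in the form used below: a weak consequence of the ratio bound, where the factor
`(198 D)²` is only used through `(198 D)² ≥ 2 d_k`. -/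
lemma level_gap {L : ℕ} (N U : Fin L → ℝ) (hN : ∀ i, 0 < N i) (hU : ∀ i, 0 < U i)
    (d : Fin L → ℕ) (hd1 : ∀ i, 1 ≤ d i) (D : ℕ) (hD : D = Finset.univ.sup d) (i j k : Fin L)
    (h : Real.sqrt ((U i / N i) / (U j / N j)) ≥ (D : ℝ) / βls) :
    2 * (d k : ℝ) * (N i / U i) ≤ N j / U j := by
  have hkD : (d k : ℝ) ≤ D := by
    rw [hD]
    exact_mod_cast Finset.le_sup (f := d) (Finset.mem_univ k)
  have hk1 : (1 : ℝ) ≤ d k := by exact_mod_cast hd1 k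
  have hi : 0 < N i / U i := div_pos (hN i) (hU i)
  have hr : (U i / N i) / (U j / N j) = (N j / U j) / (N i / U i) := by
    have := (hN i).ne'
    have := (hU i).ne'
    have := (hN j).ne'
    have := (hU j).ne'
    field_simp
  have hβ : (D : ℝ) / βls = 198 * D := by
    unfold βls
    ring
  rw [hβ, hr] at h
  have h2 := (Real.le_sqrt' (by linarith)).1 h
  rw [le_div_iff₀ hi] at h2
  refine le_trans ?_ h2
  gcongr
  nlinarith

/-- the lower bound for Case 0 (small number of caches). -/
theorem case0_lower_bound
    (L K : ℕ) (hK : 1 ≤ K)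
    (N U : Fin L → ℝ) (hN : ∀ i, 0 < N i) (hU : ∀ i, 0 < U i)
    (d : Fin L → ℕ) (hd1 : ∀ i, 1 ≤ d i) (hdK : ∀ i, d i ≤ K)
    (D : ℕ) (hD : D = Finset.univ.sup d)
    (hR1 : ∀ i, N i ≥ (K : ℝ) * U i)
    (hsep : ∀ i j : Fin L, i < j →
      Real.sqrt ((U i / N i) / (U j / N j)) ≥ (D : ℝ) / βls)
    (istar : Fin L) (M : ℝ)
    (hMlo : ∑ i ∈ Finset.univ.filter (fun i => i < istar), N i / (d i : ℝ) ≤ M)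
    (hMhi : M ≤ ∑ i ∈ Finset.univ.filter (fun i => i ≤ istar), N i / (d i : ℝ))
    (T : ℝ) (hT : T = ∑ i ∈ Finset.univ.filter (fun i => i < istar), N i / (d i : ℝ))
    (b : ℤ) (hb : b = ⌈N istar / ((d istar : ℝ) * U istar)⌉) :
    (∑ i, min (U i) (N i / ((d i : ℝ) * (b : ℝ)))) - M / (b : ℝ)
      ≥ (1 / 2) * ((∑ h ∈ Finset.univ.filter (fun h => istar < h), U h) +
          U istar * (1 - (d istar : ℝ) * (M - T) / N istar)) := by
  have hd : ∀ i, (1 : ℝ) ≤ d i := fun i => by exact_mod_cast hd1 i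
  have hd0 : ∀ i, (0 : ℝ) < d i := fun i => by linarith [hd i]
  have gap := fun i j k (hij : i < j) => level_gap N U hN hU d hd1 D hD i j k (hsep i j hij)
  have hq : 0 < N istar / U istar := div_pos (hN istar) (hU istar)
  obtain ⟨x, hx⟩ : ∃ x, x = N istar / ((d istar : ℝ) * U istar) := ⟨_, rfl⟩
  have hxq : (d istar : ℝ) * x = N istar / U istar := by
    have := (hd0 istar).ne'
    have := (hU istar).ne'
    rw [hx]
    field_simp
  have hx1 : 1 ≤ x := by
    rw [hx, le_div_iff₀ (mul_pos (hd0 istar) (hU istar)), one_mul]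
    have hK' : (d istar : ℝ) ≤ K := by exact_mod_cast hdK istar
    exact le_trans (mul_le_mul_of_nonneg_right hK' (hU istar).le) (hR1 istar)
  have hxb : x ≤ (b : ℝ) := by
    rw [hb, hx]
    exact Int.le_ceil _
  have hb2 : (b : ℝ) ≤ 2 * x := by
    have := Int.ceil_lt_add_one x
    rw [hx, ← hb, ← hx] at this
    linarith
  have hb0 : (0 : ℝ) < b := by linarith
  have hlow : ∀ i, i < istar → min (U i) (N i / ((d i : ℝ) * b)) = N i / d i / b := by
    intro i hi
    rw [div_div]
    apply min_eq_right
    rw [div_le_iff₀ (mul_pos (hd0 i) hb0), mul_comm, ← div_le_iff₀ (hU i)]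
    have g := gap i istar istar hi
    rw [← hxq] at g
    have hpos : 0 < N i / U i := div_pos (hN i) (hU i)
    have g' : (d istar : ℝ) * (2 * (N i / U i)) ≤ d istar * x := by linarith
    have g'' := le_of_mul_le_mul_left g' (hd0 istar)
    nlinarith [hd i]
  have hmid : min (U istar) (N istar / ((d istar : ℝ) * b)) = N istar / d istar / b := by
    rw [div_div]
    apply min_eq_right
    rw [div_le_iff₀ (mul_pos (hd0 istar) hb0), mul_comm, ← div_le_iff₀ (hU istar), ← hxq]
    exact mul_le_mul_of_nonneg_left hxb (hd0 istar).le
  have hhigh : ∀ i, istar < i → min (U i) (N i / ((d i : ℝ) * b)) = U i := by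
    intro i hi
    apply min_eq_left
    rw [le_div_iff₀ (mul_pos (hd0 i) hb0), mul_comm, ← le_div_iff₀ (hU i)]
    have g := gap istar i i hi
    rw [← hxq] at g
    have h1 : x ≤ d istar * x := by nlinarith [hd istar]
    have h2 : (d i : ℝ) * b ≤ d i * (2 * (d istar * x)) :=
      mul_le_mul_of_nonneg_left (by linarith) (hd0 i).le
    linarith
  have hsum : ∑ i, min (U i) (N i / ((d i : ℝ) * (b : ℝ))) =
      T / b + N istar / d istar / b + ∑ h ∈ Finset.univ.filter (fun h => istar < h), U h := by
    have e : ∀ i, min (U i) (N i / ((d i : ℝ) * (b : ℝ))) =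
        (if i < istar then N i / d i / b else 0) + (if i = istar then N i / d i / b else 0)
          + (if istar < i then U i else 0) := by
      intro i
      rcases lt_trichotomy i istar with h | h | h
      · simp [hlow i h, h, h.ne, h.not_gt]
      · subst h
        simp [hmid]
      · simp [hhigh i h, h, h.ne', h.not_gt]
    rw [Finset.sum_congr rfl (fun i _ => e i), Finset.sum_add_distrib, Finset.sum_add_distrib,
      ← Finset.sum_filter, ← Finset.sum_filter (fun i => istar < i), hT, Finset.sum_div]
    simp
  have hM : M ≤ T + N istar / d istar := by
    have e : Finset.univ.filter (fun i => i ≤ istar) =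
        insert istar (Finset.univ.filter (fun i => i < istar)) := by
      ext i
      simp [le_iff_eq_or_lt]
    rw [e, Finset.sum_insert (by simp), ← hT] at hMhi
    linarith
  have hUpos : 0 ≤ ∑ h ∈ Finset.univ.filter (fun h => istar < h), U h :=
    Finset.sum_nonneg fun i _ => (hU i).le
  have hkey : (T + N istar / d istar - M) / (2 * x) ≤ (T + N istar / d istar - M) / b :=
    div_le_div_of_nonneg_left (by linarith) hb0 hb2
  have hrw : (T + N istar / d istar - M) / (2 * x) =
      (1 / 2) * (U istar * (1 - (d istar : ℝ) * (M - T) / N istar)) := by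
    have := (hd0 istar).ne'
    have := (hU istar).ne'
    have := (hN istar).ne'
    rw [hx]
    field_simp
    ring
  rw [hrw, sub_div, add_div] at hkey
  rw [hsum]
  linarith
end

section
/- Assume regularity (R1) and K ≥ D/β. Let (H,I,J) be an M-feasible partition with J ≠ ∅ and with I_1 = ∅, i.e. M̃ ≤ (β/d_i + 1/K)·√(N_i/U_i) for every i ∈ I. Define b = ⌊(D/β)·M̃²⌋, s_h = ⌊K/8⌋ for h ∈ H, and s_i = ⌊√(N_i/U_i)/(8·M̃)⌋ for i ∈ I. Then all these parameters are feasible: b ≥ 1; d_h ≤ s_h ≤ ⌊K/2⌋ for every h ∈ H; and d_i ≤ s_i ≤ ⌊K/2⌋ for every i ∈ I. -/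
/-!
The regularity condition `K ≥ D / β` says `198 * d i ≤ 198 * D ≤ K` for every level `i`.

* Any `j ∈ J` gives `M̃ > √(N j / U j) / d j ≥ √K / D` by (R1). Hence `M̃ > 0` and
  `(D / β) * M̃² ≥ K / (β * D) ≥ 1 / β² ≥ 1`, so `b ≥ 1`.
* For `h ∈ H`, `d h ≤ K / 198 ≤ K / 8`.
* For `i ∈ I` put `r = √(N i / U i)`. The hypothesis `M̃ ≤ (β / d i + 1 / K) * r` gives
  `8 * d i * M̃ ≤ 8 * (β + d i / K) * r ≤ (16 / 198) * r ≤ r`, hence `d i ≤ r / (8 * M̃)`; and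
  `r / K ≤ M̃` gives `r / (8 * M̃) ≤ K / 8 ≤ K / 2`.
-/

open Finset

/-- feasibility of the converse parameters in Case 1a. -/
theorem case1a_parameters_feasible
    (L K : ℕ) (hK : 1 ≤ K)
    (N U : Fin L → ℝ) (hN : ∀ i, 0 < N i) (hU : ∀ i, 0 < U i)
    (d : Fin L → ℕ) (hd1 : ∀ i, 1 ≤ d i) (hdK : ∀ i, d i ≤ K)
    (D : ℕ) (hD : D = Finset.univ.sup d)
    (hR1 : ∀ i, N i ≥ (K : ℝ) * U i)
    (hKD : (K : ℝ) ≥ (D : ℝ) / βls)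
    (M : ℝ) (hM : 0 ≤ M)
    (H I J : Finset (Fin L)) (hfeas : MFeasible N U d K M H I J)
    (hJne : J.Nonempty)
    (hI1empty : ∀ i ∈ I,
      Mtilde N U d K M I J ≤ (βls / (d i : ℝ) + 1 / (K : ℝ)) * Real.sqrt (N i / U i)) :
    (1 ≤ ⌊((D : ℝ) / βls) * (Mtilde N U d K M I J) ^ 2⌋) ∧
    (∀ h ∈ H, (d h : ℤ) ≤ ⌊(K : ℝ) / 8⌋ ∧ ⌊(K : ℝ) / 8⌋ ≤ ⌊(K : ℝ) / 2⌋) ∧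
    (∀ i ∈ I, (d i : ℤ) ≤ ⌊Real.sqrt (N i / U i) / (8 * Mtilde N U d K M I J)⌋ ∧
      ⌊Real.sqrt (N i / U i) / (8 * Mtilde N U d K M I J)⌋ ≤ ⌊(K : ℝ) / 2⌋) := by
  have hK0 : (0 : ℝ) < K := by exact_mod_cast hK
  have hdD : ∀ i, (d i : ℝ) ≤ D := by
    intro i
    rw [hD]
    exact_mod_cast Finset.le_sup (f := d) (Finset.mem_univ i)
  have hd0 : ∀ i, (1 : ℝ) ≤ d i := fun i => by exact_mod_cast hd1 i
  have hK198 : 198 * (D : ℝ) ≤ K := by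
    have h : (D : ℝ) / βls = 198 * D := by
      unfold βls
      ring
    linarith
  have hIlo := hfeas.memIlo
  have hJ := hfeas.memJ
  generalize Mtilde N U d K M I J = m at *
  obtain ⟨j, hj⟩ := hJne
  have hj' := hJ j hj
  have hdj := hd0 j
  have hdDj := hdD j
  have hsqrtK : (K : ℝ) ≤ Real.sqrt (N j / U j) ^ 2 := by
    rw [Real.sq_sqrt (div_pos (hN j) (hU j)).le, le_div_iff₀ (hU j)]
    exact hR1 j
  have hr0 : 0 ≤ Real.sqrt (N j / U j) := Real.sqrt_nonneg _
  have hm0 : 0 < m := lt_of_le_of_lt (by positivity) hj'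
  have hrm : Real.sqrt (N j / U j) ≤ D * m := by
    have h1 : 1 / (d j : ℝ) * Real.sqrt (N j / U j) ≤ m := by
      refine le_trans ?_ hj'.le
      gcongr
      have : (0 : ℝ) ≤ 1 / K := by positivity
      linarith
    rw [one_div, inv_mul_le_iff₀ (by linarith)] at h1
    exact h1.trans (by gcongr)
  refine ⟨?_, ?_, ?_⟩
  · rw [Int.le_floor]
    have hD1 : (1 : ℝ) ≤ D := hdj.trans hdDj
    have h2 : (K : ℝ) ≤ (D * m) ^ 2 := hsqrtK.trans (by gcongr)
    -- Cancelling one factor `D` in `198 * D ≤ K ≤ D² * m²`.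
    have h3 : 198 ≤ (D : ℝ) * m ^ 2 := by
      by_contra! h
      nlinarith
    have h4 : (D : ℝ) / βls * m ^ 2 = 198 * (D * m ^ 2) := by
      unfold βls
      ring
    rw [h4]
    push_cast
    linarith
  · intro h _
    refine ⟨?_, Int.floor_le_floor (by linarith)⟩
    rw [Int.le_floor]
    have := hdD h
    have := hd0 h
    push_cast
    linarith
  · intro i hi
    have hlo := hIlo i hi
    have hhi := hI1empty i hi
    have hdi := hd0 i
    have hdDi := hdD i
    have hri : 0 ≤ Real.sqrt (N i / U i) := Real.sqrt_nonneg _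
    generalize Real.sqrt (N i / U i) = r at *
    constructor
    · rw [Int.le_floor, le_div_iff₀ (by linarith)]
      push_cast
      have h1 : (d i : ℝ) / K ≤ 1 / 198 := by
        rw [div_le_iff₀ hK0]
        linarith
      have h2 : (d i : ℝ) * m ≤ (βls + d i / K) * r := by
        calc (d i : ℝ) * m ≤ d i * ((βls / d i + 1 / K) * r) := by gcongr
          _ = (βls + d i / K) * r := by
            have : (d i : ℝ) ≠ 0 := by linarith
            field_simp
      have h3 : (βls + d i / K) * r ≤ (1 / 99) * r := by
        gcongr
        unfold βls
        linarith
      linarith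
    · apply Int.floor_le_floor
      rw [div_le_iff₀ (by linarith)]
      rw [one_div, inv_mul_le_iff₀ hK0] at hlo
      nlinarith
end

section
/- Assume regularity (R1) and K ≥ D/β. Let (H,I,J) be an M-feasible partition with J ≠ ∅ and with I_1 = ∅, i.e. M̃ ≤ (β/d_i + 1/K)·√(N_i/U_i) for every i ∈ I. Define b = ⌊(D/β)·M̃²⌋, s_h = ⌊K/8⌋ for h ∈ H, and s_i = ⌊√(N_i/U_i)/(8·M̃)⌋ for i ∈ I. Then Σ_{h∈H} (1/2)·min{ (s_h − d_h + 1)·U_h , N_h/(s_h·b) } + Σ_{i∈I} (1/2)·min{ (s_i − d_i + 1)·U_i , N_i/(s_i·b) } + Σ_{j∈J} min{ U_j , N_j/(d_j·b) } − M/b ≥ (β/D)·(4 − 32β)·Σ_{h∈H} K·U_h + (β/D)·(1 − 32β)·2·S_I²/(M − T_J + V_I). -/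
/-!
Write `x` for `M̃`, `r_i = √(N_i/U_i)`, `c = D/β = 198·D`, so that `N_i = U_i r_i²`,
`√(N_i U_i) = U_i r_i` and `M − T_J + V_I = x·S_I`.

A level `j ∈ J` gives `x > r_j/d_j ≥ √K/D`, hence `D x² ≥ K/D ≥ 198`; thus `b = ⌊c x²⌋` is a huge
positive integer and `b` may be replaced by `c x²` up to a negligible error.

* For `h ∈ H` both entries of the minimum are at least `8 (β/D) K U_h` (`H_term`).
* For `i ∈ I`, emptiness of `I₁` and `1/K ≤ β/D` give `r_i/x ≥ 99 d_i`, and both entries of the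
  minimum are at least `8 (β/D) U_i r_i / x` (`I_term`).
* For `j ∈ J` the minimum is `N_j/(d_j b)`, since `r_j < d_j x` (`J_term`). So the `J`-sum is `T_J/b`,
  and the `J`-sum minus `M/b` is `−(x S_I − V_I)/b ≥ −x S_I/b ≥ −2 (β/D) S_I/x`.

Summing, the left side is at least `4 (β/D) Σ K U_h + (4 − 2)(β/D) S_I/x`, while the right side is
at most that because `S_I²/(M − T_J + V_I) = S_I/x`.
-/

open Finset

lemma sqrt_ratio_pos {n u : ℝ} (hn : 0 < n) (hu : 0 < u) : 0 < Real.sqrt (n / u) :=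
  Real.sqrt_pos.mpr (div_pos hn hu)

lemma eq_mul_sqrt_ratio_sq {n u : ℝ} (hn : 0 < n) (hu : 0 < u) :
    n = u * Real.sqrt (n / u) ^ 2 := by
  rw [Real.sq_sqrt (div_pos hn hu).le]
  field_simp

lemma sqrt_mul_eq {n u : ℝ} (hn : 0 < n) (hu : 0 < u) :
    Real.sqrt (n * u) = u * Real.sqrt (n / u) := by
  have h : n * u = (u * Real.sqrt (n / u)) ^ 2 := by
    rw [mul_pow, Real.sq_sqrt (div_pos hn hu).le]
    field_simp
  rw [h, Real.sqrt_sq (mul_pos hu (sqrt_ratio_pos hn hu)).le]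

/-- Contribution of a level `h ∈ H`, where `K x ≤ r`; `1 / (198 * D)` is `β / D`. -/
lemma H_term {K D d u r x b : ℝ} {s : ℤ} (hD : 1 ≤ D) (hdD : d ≤ D) (hKD : 198 * D ≤ K)
    (hu : 0 < u) (hx : 0 < x) (hb : 0 < b) (hbx : b ≤ 198 * D * x ^ 2)
    (hr : K * x ≤ r) (hs : s = ⌊K / 8⌋) :
    4 / (198 * D) * (K * u) ≤
      (1 / 2) * min (((s : ℝ) - d + 1) * u) (u * r ^ 2 / ((s : ℝ) * b)) := by
  have hs1 : (s : ℝ) ≤ K / 8 := hs ▸ Int.floor_le _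
  have hs2 : K / 8 < (s : ℝ) + 1 := hs ▸ Int.lt_floor_add_one _
  have hs0 : (0 : ℝ) < s := by linarith
  have hK : 0 < K := by linarith
  have key : 8 / (198 * D) * (K * u) ≤
      min (((s : ℝ) - d + 1) * u) (u * r ^ 2 / ((s : ℝ) * b)) := by
    apply le_min
    · have h1 : 8 / (198 * D) ≤ 8 / 198 := by
        gcongr
        linarith
      calc 8 / (198 * D) * (K * u) ≤ 8 / 198 * (K * u) := by gcongr
        _ = (8 / 198 * K) * u := by ring
        _ ≤ _ := by
          gcongr
          linarith
    · rw [le_div_iff₀ (by positivity)]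
      have h2 : (s : ℝ) * b ≤ K / 8 * (198 * D * x ^ 2) := by gcongr
      calc 8 / (198 * D) * (K * u) * ((s : ℝ) * b)
          ≤ 8 / (198 * D) * (K * u) * (K / 8 * (198 * D * x ^ 2)) := by gcongr
        _ = u * (K * x) ^ 2 := by field_simp
        _ ≤ u * r ^ 2 := by gcongr
  calc 4 / (198 * D) * (K * u) = (1 / 2) * (8 / (198 * D) * (K * u)) := by ring
    _ ≤ _ := by gcongr

/-- Contribution of a level `i ∈ I`. The hypothesis `99 * d * x ≤ r` follows from the emptiness of `I₁`
and `1 / K ≤ β / d`. -/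
lemma I_term {D d u r x b : ℝ} {s : ℤ} (hD : 1 ≤ D) (hd : 1 ≤ d)
    (hu : 0 < u) (hx : 0 < x) (hb : 0 < b) (hbx : b ≤ 198 * D * x ^ 2)
    (hr : 99 * d * x ≤ r) (hs : s = ⌊r / (8 * x)⌋) :
    4 / (198 * D) * (u * r / x) ≤
      (1 / 2) * min (((s : ℝ) - d + 1) * u) (u * r ^ 2 / ((s : ℝ) * b)) := by
  obtain ⟨q, rfl⟩ : ∃ q, r = q * x := ⟨r / x, by field_simp⟩
  have hq : 99 * d ≤ q := le_of_mul_le_mul_right hr hx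
  have hq8 : q * x / (8 * x) = q / 8 := by field_simp
  rw [hq8] at hs
  have hs1 : (s : ℝ) ≤ q / 8 := hs ▸ Int.floor_le _
  have hs2 : q / 8 < (s : ℝ) + 1 := hs ▸ Int.lt_floor_add_one _
  have hs0 : (0 : ℝ) < s := by linarith
  have hq0 : 0 < q := by linarith
  have hux : u * (q * x) / x = q * u := by field_simp
  rw [hux]
  have key : 8 / (198 * D) * (q * u) ≤
      min (((s : ℝ) - d + 1) * u) (u * (q * x) ^ 2 / ((s : ℝ) * b)) := by
    apply le_min
    · have h1 : 8 / (198 * D) ≤ 8 / 198 := by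
        gcongr
        linarith
      calc 8 / (198 * D) * (q * u) ≤ 8 / 198 * (q * u) := by gcongr
        _ = (8 / 198 * q) * u := by ring
        _ ≤ _ := by
          gcongr
          linarith
    · rw [le_div_iff₀ (by positivity)]
      have h2 : (s : ℝ) * b ≤ q / 8 * (198 * D * x ^ 2) := by gcongr
      calc 8 / (198 * D) * (q * u) * ((s : ℝ) * b)
          ≤ 8 / (198 * D) * (q * u) * (q / 8 * (198 * D * x ^ 2)) := by gcongr
        _ = u * (q * x) ^ 2 := by field_simp
  calc 4 / (198 * D) * (q * u) = (1 / 2) * (8 / (198 * D) * (q * u)) := by ring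
    _ ≤ _ := by gcongr

/-- For a level `j ∈ J`, the minimum is attained by its second entry. -/
lemma J_term {D d u r x b : ℝ} (hd : 1 ≤ d) (hdD : d ≤ D)
    (hu : 0 < u) (hr0 : 0 < r) (hb : 0 < b) (hbx : D * x ^ 2 ≤ b)
    (hr : r ≤ d * x) :
    min u (u * r ^ 2 / (d * b)) = u * r ^ 2 / (d * b) := by
  apply min_eq_right
  rw [div_le_iff₀ (by positivity)]
  gcongr
  calc r ^ 2 ≤ (d * x) ^ 2 := by gcongr
    _ = d * (d * x ^ 2) := by ring
    _ ≤ d * (D * x ^ 2) := by gcongr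
    _ ≤ d * b := by gcongr

/-- the converse lower bound for Case 1a (I₁ = ∅, J ≠ ∅). -/
theorem case1a_lower_bound
    (L K : ℕ) (hK : 1 ≤ K)
    (N U : Fin L → ℝ) (hN : ∀ i, 0 < N i) (hU : ∀ i, 0 < U i)
    (d : Fin L → ℕ) (hd1 : ∀ i, 1 ≤ d i) (hdK : ∀ i, d i ≤ K)
    (D : ℕ) (hD : D = Finset.univ.sup d)
    (hR1 : ∀ i, N i ≥ (K : ℝ) * U i)
    (hKD : (K : ℝ) ≥ (D : ℝ) / βls)
    (M : ℝ) (hM : 0 ≤ M)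
    (H I J : Finset (Fin L)) (hfeas : MFeasible N U d K M H I J)
    (hJne : J.Nonempty)
    (hI1empty : ∀ i ∈ I,
      Mtilde N U d K M I J ≤ (βls / (d i : ℝ) + 1 / (K : ℝ)) * Real.sqrt (N i / U i))
    (b : ℤ) (hb : b = ⌊((D : ℝ) / βls) * (Mtilde N U d K M I J) ^ 2⌋)
    (s : Fin L → ℤ)
    (hsH : ∀ h ∈ H, s h = ⌊(K : ℝ) / 8⌋)
    (hsI : ∀ i ∈ I, s i = ⌊Real.sqrt (N i / U i) / (8 * Mtilde N U d K M I J)⌋) :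
    (∑ h ∈ H, (1 / 2) * min (((s h : ℝ) - (d h : ℝ) + 1) * U h) (N h / ((s h : ℝ) * (b : ℝ)))) +
      (∑ i ∈ I, (1 / 2) * min (((s i : ℝ) - (d i : ℝ) + 1) * U i) (N i / ((s i : ℝ) * (b : ℝ)))) +
      (∑ j ∈ J, min (U j) (N j / ((d j : ℝ) * (b : ℝ)))) - M / (b : ℝ)
    ≥ (βls / (D : ℝ)) * (4 - 32 * βls) * (∑ h ∈ H, (K : ℝ) * U h) +
        (βls / (D : ℝ)) * (1 - 32 * βls) *
          (2 * (Ssum N U I) ^ 2 / (M - Tsum N d J + Vsum N K I)) := by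
  have hβ : βls = 1 / 198 := rfl
  obtain ⟨-, -, -, -, hIne, hmH, -, -, hmJ⟩ := hfeas
  have hxdef : Mtilde N U d K M I J = (M - Tsum N d J + Vsum N K I) / Ssum N U I := rfl
  generalize Mtilde N U d K M I J = x at *
  have hr0 : ∀ i, 0 < Real.sqrt (N i / U i) := fun i => sqrt_ratio_pos (hN i) (hU i)
  have hNr : ∀ i, N i = U i * Real.sqrt (N i / U i) ^ 2 :=
    fun i => eq_mul_sqrt_ratio_sq (hN i) (hU i)
  have hdD' : ∀ i, d i ≤ D := fun i => hD ▸ Finset.le_sup (Finset.mem_univ i)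
  have hdD : ∀ i, (d i : ℝ) ≤ D := fun i => by exact_mod_cast hdD' i
  have hd : ∀ i, (1 : ℝ) ≤ d i := fun i => by exact_mod_cast hd1 i
  have hKpos : (0 : ℝ) < K := by exact_mod_cast hK
  obtain ⟨j₀, hj₀⟩ := hJne
  have hD1 : (1 : ℝ) ≤ D := (hd j₀).trans (hdD j₀)
  rw [hβ] at hKD hb hI1empty ⊢
  have hKD : 198 * (D : ℝ) ≤ K := by
    have : (D : ℝ) / (1 / 198) = 198 * D := by ring
    linarith
  have hJr : ∀ j ∈ J, Real.sqrt (N j / U j) < d j * x := by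
    intro j hj
    have h1 := hmJ j hj
    have h2 : 0 < 1 / (K : ℝ) * Real.sqrt (N j / U j) := mul_pos (by positivity) (hr0 j)
    have h3 : 1 / (d j : ℝ) * Real.sqrt (N j / U j) < x := by nlinarith
    have hdj : (0 : ℝ) < d j := by linarith [hd j]
    rw [one_div_mul_eq_div, div_lt_iff₀ hdj] at h3
    linarith
  have hx : 0 < x := by
    have := (hr0 j₀).trans (hJr j₀ hj₀)
    exact pos_of_mul_pos_right this (by linarith [hd j₀])
  -- The level `j₀` forces `K ≤ r² < (D x)²`, whence `D x² ≥ 198`.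
  have hDx : 198 ≤ (D : ℝ) * x ^ 2 := by
    have h1 : (K : ℝ) ≤ Real.sqrt (N j₀ / U j₀) ^ 2 := by
      rw [Real.sq_sqrt (div_pos (hN j₀) (hU j₀)).le, le_div_iff₀ (hU j₀)]
      exact hR1 j₀
    have h2 : Real.sqrt (N j₀ / U j₀) ≤ D * x :=
      (hJr j₀ hj₀).le.trans (mul_le_mul_of_nonneg_right (hdD j₀) hx.le)
    have h3 : Real.sqrt (N j₀ / U j₀) ^ 2 ≤ (D * x) ^ 2 := pow_le_pow_left₀ (hr0 j₀).le h2 2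
    have h4 : (D : ℝ) * 198 ≤ D * (D * x ^ 2) := by nlinarith
    exact le_of_mul_le_mul_left h4 (by linarith)
  have hceq : (D : ℝ) / (1 / 198) * x ^ 2 = 198 * D * x ^ 2 := by ring
  rw [hceq] at hb
  have hb1 : (b : ℝ) ≤ 198 * D * x ^ 2 := hb ▸ Int.floor_le _
  have hb2 : 198 * D * x ^ 2 < (b : ℝ) + 1 := hb ▸ Int.lt_floor_add_one _
  have hbpos : (0 : ℝ) < b := by linarith
  have hS : 0 < Ssum N U I :=
    Finset.sum_pos (fun i _ => Real.sqrt_pos.mpr (mul_pos (hN i) (hU i))) hIne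
  have hSx : M - Tsum N d J + Vsum N K I = x * Ssum N U I := by
    rw [hxdef]
    field_simp
  have hV : 0 ≤ Vsum N K I :=
    Finset.sum_nonneg fun i _ => div_nonneg (hN i).le hKpos.le
  have sumH : 4 / (198 * (D : ℝ)) * (∑ h ∈ H, (K : ℝ) * U h) ≤
      ∑ h ∈ H, (1 / 2) * min (((s h : ℝ) - (d h : ℝ) + 1) * U h)
        (N h / ((s h : ℝ) * (b : ℝ))) := by
    rw [Finset.mul_sum]
    refine Finset.sum_le_sum fun h hh => ?_
    have hr : (K : ℝ) * x ≤ Real.sqrt (N h / U h) := by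
      have := hmH h hh
      rw [one_div_mul_eq_div, lt_div_iff₀ hKpos] at this
      linarith
    have := H_term hD1 (hdD h) hKD (hU h) hx hbpos hb1 hr (hsH h hh)
    rwa [← hNr h] at this
  have sumI : 4 / (198 * (D : ℝ)) * (Ssum N U I / x) ≤
      ∑ i ∈ I, (1 / 2) * min (((s i : ℝ) - (d i : ℝ) + 1) * U i)
        (N i / ((s i : ℝ) * (b : ℝ))) := by
    rw [Ssum, Finset.sum_div, Finset.mul_sum]
    refine Finset.sum_le_sum fun i hi => ?_
    have hdi : (0 : ℝ) < d i := by linarith [hd i]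
    have hr : 99 * (d i : ℝ) * x ≤ Real.sqrt (N i / U i) := by
      have h1 := hI1empty i hi
      have h2 : 1 / (K : ℝ) ≤ 1 / (198 * d i) :=
        one_div_le_one_div_of_le (by positivity) (by linarith [hdD i])
      have h3 : (1 / 198 / (d i : ℝ) + 1 / (K : ℝ)) ≤ 1 / (99 * d i) := by
        have : 1 / 198 / (d i : ℝ) + 1 / (198 * d i) = 1 / (99 * d i) := by
          field_simp
          norm_num
        linarith
      have h4 := h1.trans (mul_le_mul_of_nonneg_right h3 (hr0 i).le)
      rw [one_div_mul_eq_div, le_div_iff₀ (by positivity)] at h4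
      linarith
    have := I_term hD1 (hd i) (hU i) hx hbpos hb1 hr (hsI i hi)
    rwa [← hNr i, ← sqrt_mul_eq (hN i) (hU i)] at this
  have sumJ : ∑ j ∈ J, min (U j) (N j / ((d j : ℝ) * (b : ℝ))) = Tsum N d J / b := by
    rw [Tsum, Finset.sum_div]
    refine Finset.sum_congr rfl fun j hj => ?_
    have := J_term (hd j) (hdD j) (hU j) (hr0 j) hbpos (by linarith) (hJr j hj).le
    rw [← hNr j] at this
    rw [this, div_div]
  have hmem : M / b - Tsum N d J / b ≤ 2 / (198 * (D : ℝ)) * (Ssum N U I / x) := by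
    rw [← sub_div, div_le_iff₀ hbpos]
    calc M - Tsum N d J ≤ x * Ssum N U I := by linarith
      _ = 2 / (198 * (D : ℝ)) * (Ssum N U I / x) * (99 * D * x ^ 2) := by
        field_simp
        norm_num
      _ ≤ _ := by
        gcongr
        linarith
  have hq : 2 * Ssum N U I ^ 2 / (M - Tsum N d J + Vsum N K I) = 2 * (Ssum N U I / x) := by
    rw [hSx]
    field_simp
  rw [hq, sumJ]
  have hinv : (0 : ℝ) ≤ 1 / (198 * D) := by positivity
  have hA : 0 ≤ 1 / (198 * (D : ℝ)) * (∑ h ∈ H, (K : ℝ) * U h) :=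
    mul_nonneg hinv (Finset.sum_nonneg fun h _ => mul_nonneg hKpos.le (hU h).le)
  have hB : 0 ≤ 1 / (198 * (D : ℝ)) * (Ssum N U I / x) := by positivity
  have e4 : (4 : ℝ) / (198 * D) = 4 * (1 / (198 * D)) := by ring
  have e2 : (2 : ℝ) / (198 * D) = 2 * (1 / (198 * D)) := by ring
  have e1 : (1 / 198 : ℝ) / D = 1 / (198 * D) := by rw [div_div]
  rw [e4, mul_assoc] at sumH sumI
  rw [e2, mul_assoc] at hmem
  rw [e1]
  linarith
end

section
/- Assume regularity (R1) and K ≥ D/β. Let (H,I,J) be an M-feasible partition with J = ∅ (so M̃ = (M + V_I)/S_I) and with I_1 = ∅, i.e. M̃ ≤ (β/d_i + 1/K)·√(N_i/U_i) for every i ∈ I, and suppose level 1 ∈ I is a most popular level: U_1/N_1 ≥ U_i/N_i for all i. Define t = ⌊√(N_1/U_1)/(32·M̃)⌋, b = ⌊8·M̃·√(N_1/U_1)⌋, s_h = ⌊2·K·M̃/√(N_1/U_1)⌋ for h ∈ H, and s_i = ⌊2·√((N_i/U_i)/(N_1/U_1))⌋ for i ∈ I. Then Σ_{h∈H} (1/2)·min{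 (s_h·t − d_h + 1)·U_h , N_h/(s_h·b) } + Σ_{i∈I} (1/2)·min{ (s_i·t − d_i + 1)·U_i , N_i/(s_i·b) } − t·M/b ≥ (1/64)·(1 − 64β)·Σ_{h∈H} K·U_h + (1/256)·(1 − 192β)·2·S_I²/(M + V_I). -/
/-!
Write `x = √(N₁/U₁)`, `xᵢ = √(Nᵢ/Uᵢ) ≥ x` and `m = M̃`, so that `M + V_I = m · S_I` when `J = ∅`.

All the arguments of the floors are bounded below: `x/(32m) ≥ 3`, because `1/K ≤ β/D` gives
`m ≤ 2β·x/d₁`; `8mx ≥ 8`, because `m ≥ x/K` and `x² ≥ K` by regularity; and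
`2Km/x ≥ 2`, `2xᵢ/x ≥ 2`. Since `n ≤ y` implies `n/(n+1) · y ≤ ⌊y⌋` (`floor_lower`), each floor
costs only a constant factor: `3/4` for `t`, `8/9` for `b`, and `2/3` for `s`.

Each level can then be estimated separately. A level of `H` contributes at least
`(1/64)(1 - 64β) K U_h` (`term_H`), where `d_h ≤ βK` and `Km < x_h` are used; a level of `I`
contributes at least `(1/64)(1 - 64β) √(NᵢUᵢ)/m` (`term_I`), where `dᵢ ≤ 2β·xᵢ/m` is used.
Finally `tM/b ≤ (9/2048) M/m² ≤ (9/2048) S_I/m`, and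
`(1/64)(1 - 64β) - 9/2048 ≥ (1/128)(1 - 192β)`, while `2 S_I²/(M + V_I) = 2 S_I/m`.
-/

open Finset

/-- Rounding down a real `y ≥ n` loses at most the factor `n/(n+1)`. -/
lemma floor_lower (n : ℕ) (y : ℝ) (h : (n : ℝ) ≤ y) :
    (n : ℝ) / (n + 1) * y ≤ (⌊y⌋ : ℝ) := by
  have h1 : (n : ℝ) ≤ (⌊y⌋ : ℝ) := by
    have : (n : ℤ) ≤ ⌊y⌋ := Int.le_floor.2 (by exact_mod_cast h)
    exact_mod_cast this
  have h2 := Int.lt_floor_add_one y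
  have hn : (0 : ℝ) ≤ n := Nat.cast_nonneg n
  rw [div_mul_eq_mul_div, div_le_iff₀ (by positivity)]
  nlinarith

/-- Contribution of a level of `H`; here `z` stands for `√(N_h/U_h)`. -/
lemma term_H {K m x z u n s t b d : ℝ} (hK : 0 < K) (hm : 0 < m) (hx : 0 < x)
    (hu : 0 < u) (hn : n = u * z ^ 2)
    (hs1 : 2 / 3 * (2 * K * m / x) ≤ s) (hs2 : s ≤ 2 * K * m / x)
    (ht : 3 / 4 * (x / (32 * m)) ≤ t) (hb0 : 0 < b) (hb : b ≤ 8 * m * x)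
    (hd : d ≤ K / 198) (hz : K * m < z) :
    (1 / 64) * (1 - 64 * (1 / 198)) * (K * u) ≤
      (1 / 2) * min ((s * t - d + 1) * u) (n / (s * b)) := by
  have hs0 : 0 < s := lt_of_lt_of_le (by positivity) hs1
  have hst : K / 32 ≤ s * t := by
    calc K / 32 = (2 / 3 * (2 * K * m / x)) * (3 / 4 * (x / (32 * m))) := by field_simp; norm_num
      _ ≤ s * t := mul_le_mul hs1 ht (by positivity) hs0.le
  have hsb : s * b ≤ 16 * K * m ^ 2 := by
    calc s * b ≤ (2 * K * m / x) * (8 * m * x) := mul_le_mul hs2 hb hb0.le (by positivity)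
      _ = 16 * K * m ^ 2 := by field_simp; norm_num
  have h1 : (1 / 32) * (1 - 64 * (1 / 198)) * (K * u) ≤ (s * t - d + 1) * u := by
    have : (1 / 32) * (1 - 64 * (1 / 198)) * K ≤ s * t - d + 1 := by linarith
    nlinarith
  have h2 : (1 / 32) * (1 - 64 * (1 / 198)) * (K * u) ≤ n / (s * b) := by
    rw [le_div_iff₀ (by positivity), hn]
    have hz2 : (K * m) ^ 2 ≤ z ^ 2 := pow_le_pow_left₀ (by positivity) hz.le 2
    have h3 : K * u * (s * b) ≤ K * u * (16 * K * m ^ 2) :=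
      mul_le_mul_of_nonneg_left hsb (by positivity)
    have h4 : u * (K * m) ^ 2 ≤ u * z ^ 2 := mul_le_mul_of_nonneg_left hz2 hu.le
    have h5 : 0 < K * u * (s * b) := by positivity
    nlinarith
  have := le_min h1 h2
  linarith

/-- Contribution of a level of `I`; here `z` stands for `√(Nᵢ/Uᵢ)` and `a` for `√(NᵢUᵢ)`. -/
lemma term_I {m x z u a n s t b d : ℝ} (hm : 0 < m) (hx : 0 < x) (hz0 : 0 < z)
    (hu : 0 < u) (ha : a = u * z) (hn : n = u * z ^ 2)
    (hs1 : 2 / 3 * (2 * (z / x)) ≤ s) (hs2 : s ≤ 2 * (z / x))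
    (ht : 3 / 4 * (x / (32 * m)) ≤ t) (hb0 : 0 < b) (hb : b ≤ 8 * m * x)
    (hd : d * m ≤ z / 99) :
    (1 / 64) * (1 - 64 * (1 / 198)) / m * a ≤
      (1 / 2) * min ((s * t - d + 1) * u) (n / (s * b)) := by
  have hs0 : 0 < s := lt_of_lt_of_le (by positivity) hs1
  have hst : z / m / 32 ≤ s * t := by
    calc z / m / 32 = (2 / 3 * (2 * (z / x))) * (3 / 4 * (x / (32 * m))) := by
          field_simp; norm_num
      _ ≤ s * t := mul_le_mul hs1 ht (by positivity) hs0.le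
  have hsb : s * b ≤ 16 * z * m := by
    calc s * b ≤ (2 * (z / x)) * (8 * m * x) := mul_le_mul hs2 hb hb0.le (by positivity)
      _ = 16 * z * m := by field_simp; norm_num
  have hd' : d ≤ z / m / 99 := by
    rw [div_right_comm, le_div_iff₀ hm]; exact hd
  have h1 : (1 / 32) * (1 - 64 * (1 / 198)) / m * a ≤ (s * t - d + 1) * u := by
    have h : (1 / 32) * (1 - 64 * (1 / 198)) * (z / m) ≤ s * t - d + 1 := by linarith
    have := mul_le_mul_of_nonneg_right h hu.le
    calc (1 / 32) * (1 - 64 * (1 / 198)) / m * a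
        = (1 / 32) * (1 - 64 * (1 / 198)) * (z / m) * u := by rw [ha]; ring
      _ ≤ _ := this
  have h2 : (1 / 32) * (1 - 64 * (1 / 198)) / m * a ≤ n / (s * b) := by
    rw [le_div_iff₀ (by positivity), hn, ha]
    calc (1 / 32) * (1 - 64 * (1 / 198)) / m * (u * z) * (s * b)
        ≤ (1 / 32) * (1 - 64 * (1 / 198)) / m * (u * z) * (16 * z * m) :=
          mul_le_mul_of_nonneg_left hsb
            (mul_nonneg (div_nonneg (by norm_num) hm.le) (by positivity))
      _ = (1 / 2) * (1 - 64 * (1 / 198)) * (u * z ^ 2) := by field_simp; norm_num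
      _ ≤ u * z ^ 2 := by
          have : 0 < u * z ^ 2 := by positivity
          linarith
  have := le_min h1 h2
  have e : (1 / 64) * (1 - 64 * (1 / 198)) / m * a
      = (1 / 2) * ((1 / 32) * (1 - 64 * (1 / 198)) / m * a) := by ring
  rw [e]
  linarith

/-- the converse lower bound for Case 1b (I₁ = ∅, J = ∅). -/
theorem case1b_lower_bound
    (L K : ℕ) (hK : 1 ≤ K)
    (N U : Fin L → ℝ) (hN : ∀ i, 0 < N i) (hU : ∀ i, 0 < U i)
    (d : Fin L → ℕ) (hd1 : ∀ i, 1 ≤ d i) (hdK : ∀ i, d i ≤ K)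
    (D : ℕ) (hD : D = Finset.univ.sup d)
    (hR1 : ∀ i, N i ≥ (K : ℝ) * U i)
    (hKD : (K : ℝ) ≥ (D : ℝ) / βls)
    (M : ℝ) (hM : 0 ≤ M)
    (H I J : Finset (Fin L)) (hfeas : MFeasible N U d K M H I J)
    (hJempty : J = ∅)
    (hI1empty : ∀ i ∈ I,
      Mtilde N U d K M I J ≤ (βls / (d i : ℝ) + 1 / (K : ℝ)) * Real.sqrt (N i / U i))
    (one : Fin L) (hone : one ∈ I)
    (honeMax : ∀ i, U i / N i ≤ U one / N one)
    (t : ℤ) (ht : t = ⌊Real.sqrt (N one / U one) / (32 * Mtilde N U d K M I J)⌋)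
    (b : ℤ) (hb : b = ⌊8 * Mtilde N U d K M I J * Real.sqrt (N one / U one)⌋)
    (s : Fin L → ℤ)
    (hsH : ∀ h ∈ H, s h = ⌊2 * (K : ℝ) * Mtilde N U d K M I J / Real.sqrt (N one / U one)⌋)
    (hsI : ∀ i ∈ I, s i = ⌊2 * Real.sqrt ((N i / U i) / (N one / U one))⌋) :
    (∑ h ∈ H, (1 / 2) *
        min (((s h : ℝ) * (t : ℝ) - (d h : ℝ) + 1) * U h) (N h / ((s h : ℝ) * (b : ℝ)))) +
      (∑ i ∈ I, (1 / 2) *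
        min (((s i : ℝ) * (t : ℝ) - (d i : ℝ) + 1) * U i) (N i / ((s i : ℝ) * (b : ℝ)))) -
      (t : ℝ) * M / (b : ℝ)
    ≥ (1 / 64) * (1 - 64 * βls) * (∑ h ∈ H, (K : ℝ) * U h) +
        (1 / 256) * (1 - 192 * βls) * (2 * (Ssum N U I) ^ 2 / (M + Vsum N K I)) := by
  have hKpos : (0 : ℝ) < K := by exact_mod_cast hK
  set m := Mtilde N U d K M I J with hmdef
  set x := Real.sqrt (N one / U one) with hxdef
  have hβ : βls = 1 / 198 := rfl
  have hroot : ∀ i, 0 < Real.sqrt (N i / U i) := fun i =>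
    Real.sqrt_pos.2 (div_pos (hN i) (hU i))
  have hx : 0 < x := hroot one
  have hNsq : ∀ i, N i = U i * Real.sqrt (N i / U i) ^ 2 := fun i => by
    rw [Real.sq_sqrt (div_pos (hN i) (hU i)).le, mul_div_cancel₀ _ (hU i).ne']
  have hxmin : ∀ i, x ≤ Real.sqrt (N i / U i) := fun i => by
    apply Real.sqrt_le_sqrt
    have := honeMax i
    rw [div_le_div_iff₀ (hN i) (hN one)] at this
    rw [div_le_div_iff₀ (hU one) (hU i)]
    linarith
  have hdK' : ∀ i, (d i : ℝ) ≤ K / 198 := fun i => by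
    have h1 : (d i : ℝ) ≤ D := by
      rw [hD]; exact_mod_cast Finset.le_sup (Finset.mem_univ i)
    rw [hβ] at hKD
    have h2 : (D : ℝ) / (1 / 198) = 198 * D := by ring
    linarith
  have hmx : x ≤ K * m := by
    have := hfeas.memIlo one hone
    rw [one_div_mul_eq_div, div_le_iff₀ hKpos] at this
    linarith
  have hm : 0 < m := pos_of_mul_pos_right (lt_of_lt_of_le hx hmx) hKpos.le
  -- `1/K ≤ β/dᵢ` turns the upper bound on `M̃` into `dᵢ M̃ ≤ 2β √(Nᵢ/Uᵢ)`.
  have hdm : ∀ i ∈ I, (d i : ℝ) * m ≤ Real.sqrt (N i / U i) / 99 := fun i hi => by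
    have h := hI1empty i hi
    have hdpos : (0 : ℝ) < d i := by exact_mod_cast hd1 i
    rw [hβ] at h
    have h1 : (d i : ℝ) * (1 / 198 / (d i : ℝ) + 1 / K) ≤ 1 / 99 := by
      have e : (d i : ℝ) * (1 / 198 / (d i : ℝ) + 1 / K) = 1 / 198 + d i / K := by
        field_simp
      have : (d i : ℝ) / K ≤ 1 / 198 := by
        rw [div_le_iff₀ hKpos]; linarith [hdK' i]
      rw [e]; linarith
    have h2 := mul_le_mul_of_nonneg_left h hdpos.le
    have h3 := mul_le_mul_of_nonneg_right h1 (hroot i).le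
    rw [← mul_assoc] at h2
    linarith
  have htarg : (3 : ℝ) ≤ x / (32 * m) := by
    rw [le_div_iff₀ (by positivity)]
    have h1 := hdm one hone
    have h2 : (1 : ℝ) ≤ d one := by exact_mod_cast hd1 one
    have h3 : m ≤ d one * m := le_mul_of_one_le_left hm.le h2
    linarith
  have ht1 : 3 / 4 * (x / (32 * m)) ≤ (t : ℝ) := by
    have := floor_lower 3 _ (by exact_mod_cast htarg)
    rw [← ht] at this
    norm_num at this ⊢
    exact this
  have ht2 : (t : ℝ) ≤ x / (32 * m) := by rw [ht]; exact Int.floor_le _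
  have hbarg : (8 : ℝ) ≤ 8 * m * x := by
    have h1 : (K : ℝ) ≤ x ^ 2 := by
      rw [Real.sq_sqrt (div_pos (hN one) (hU one)).le, le_div_iff₀ (hU one)]
      exact hR1 one
    have h2 : (K : ℝ) * 1 ≤ K * (m * x) := by nlinarith
    have := le_of_mul_le_mul_left h2 hKpos
    linarith
  have hb1 : 8 / 9 * (8 * m * x) ≤ (b : ℝ) := by
    have := floor_lower 8 _ (by exact_mod_cast hbarg)
    rw [← hb] at this
    norm_num at this ⊢
    exact this
  have hb2 : (b : ℝ) ≤ 8 * m * x := by rw [hb]; exact Int.floor_le _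
  have hb0 : (0 : ℝ) < b := lt_of_lt_of_le (by positivity) hb1
  have hHsum : (1 / 64) * (1 - 64 * βls) * (∑ h ∈ H, (K : ℝ) * U h) ≤ ∑ h ∈ H, (1 / 2) *
      min (((s h : ℝ) * (t : ℝ) - (d h : ℝ) + 1) * U h) (N h / ((s h : ℝ) * (b : ℝ))) := by
    rw [Finset.mul_sum, hβ]
    refine Finset.sum_le_sum fun h hh => ?_
    have harg : (2 : ℝ) ≤ 2 * K * m / x := by
      rw [le_div_iff₀ hx]; linarith
    have hs1 := floor_lower 2 _ (Nat.cast_ofNat.trans_le harg)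
    rw [← hsH h hh] at hs1
    have hs2 : (s h : ℝ) ≤ 2 * K * m / x := by rw [hsH h hh]; exact Int.floor_le _
    have hz := hfeas.memH h hh
    rw [one_div_mul_eq_div, lt_div_iff₀ hKpos, mul_comm] at hz
    exact term_H hKpos hm hx (hU h) (hNsq h) (by norm_num at hs1 ⊢; exact hs1) hs2 ht1 hb0 hb2
      (hdK' h) hz
  have hIsum : (1 / 64) * (1 - 64 * (1 / 198)) / m * Ssum N U I ≤ ∑ i ∈ I, (1 / 2) *
      min (((s i : ℝ) * (t : ℝ) - (d i : ℝ) + 1) * U i) (N i / ((s i : ℝ) * (b : ℝ))) := by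
    rw [Ssum, Finset.mul_sum]
    refine Finset.sum_le_sum fun i hi => ?_
    have hsi := hsI i hi
    rw [Real.sqrt_div (div_pos (hN i) (hU i)).le] at hsi
    have harg : (2 : ℝ) ≤ 2 * (Real.sqrt (N i / U i) / x) := by
      have : 1 ≤ Real.sqrt (N i / U i) / x := (one_le_div hx).2 (hxmin i)
      linarith
    have hs1 := floor_lower 2 _ (Nat.cast_ofNat.trans_le harg)
    rw [← hsi] at hs1
    have hs2 : (s i : ℝ) ≤ 2 * (Real.sqrt (N i / U i) / x) := by
      rw [hsi]; exact Int.floor_le _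
    have ha : Real.sqrt (N i * U i) = U i * Real.sqrt (N i / U i) := by
      have e : N i * U i = U i ^ 2 * (N i / U i) := by
        have := (hU i).ne'
        field_simp
      rw [e, Real.sqrt_mul (sq_nonneg _), Real.sqrt_sq (hU i).le]
    exact term_I hm hx (hroot i) (hU i) ha (hNsq i) (by norm_num at hs1 ⊢; exact hs1) hs2 ht1
      hb0 hb2 (hdm i hi)
  have hS : 0 < Ssum N U I :=
    Finset.sum_pos (fun i _ => Real.sqrt_pos.2 (mul_pos (hN i) (hU i))) hfeas.Inonempty
  have hV : 0 ≤ Vsum N K I := Finset.sum_nonneg fun i _ => (div_pos (hN i) hKpos).le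
  have hMV : M + Vsum N K I = m * Ssum N U I := by
    rw [hmdef, Mtilde, hJempty, Tsum, Finset.sum_empty, sub_zero, div_mul_cancel₀ _ hS.ne']
  have htail : (t : ℝ) * M / b ≤ 9 / 2048 * (Ssum N U I / m) := by
    have hMle : M ≤ m * Ssum N U I := by linarith
    calc (t : ℝ) * M / b ≤ (x / (32 * m)) * (m * Ssum N U I) / (8 / 9 * (8 * m * x)) := by
          apply div_le_div₀ (by positivity) _ (by positivity) hb1
          exact mul_le_mul ht2 hMle hM (by positivity)
      _ = 9 / 2048 * (Ssum N U I / m) := by field_simp; norm_num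
  have hrhs : 2 * (Ssum N U I) ^ 2 / (M + Vsum N K I) = 2 * (Ssum N U I / m) := by
    rw [hMV]; field_simp
  have hIeq : (1 / 64) * (1 - 64 * (1 / 198)) / m * Ssum N U I
      = (1 / 64) * (1 - 64 * (1 / 198)) * (Ssum N U I / m) := by ring
  have hSm : 0 < Ssum N U I / m := div_pos hS hm
  rw [hrhs]
  rw [hIeq] at hIsum
  have hnum : (1 / 256) * (1 - 192 * βls) * (2 * (Ssum N U I / m)) ≤
      (1 / 64) * (1 - 64 * (1 / 198)) * (Ssum N U I / m) - 9 / 2048 * (Ssum N U I / m) := by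
    rw [hβ]; linarith
  linarith
end

section
/- Let (H,I,J) be an M-feasible partition. Then: (i) for any two levels i, j ∈ I, √((U_i/N_i)/(U_j/N_j)) ≤ K/d_i + 1; and (ii) for any h ∈ H and any i₁ ∈ I with M̃ > (β/d_{i₁} + 1/K)·√(N_{i₁}/U_{i₁}), one has √((U_{i₁}/N_{i₁})/(U_h/N_h)) ≥ β·K/d_{i₁} + 1. -/
/-!
Write `x i = √(N i / U i)`. The ratio in the theorem is `√((U i / N i) / (U j / N j)) = x j / x i`
(`sqrt_popularity_ratio`). Both bounds then follow by comparing two of the feasibility inequalities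
through `Mtilde` and multiplying by `K`: `x j / K ≤ Mtilde ≤ (1 / d i + 1 / K) * x i` gives the
first, and `(β / d i₁ + 1 / K) * x i₁ < Mtilde < x h / K` gives the second.
-/

open Finset

theorem sqrt_popularity_ratio (Ni Ui Nj Uj : ℝ) (hNi : 0 < Ni) (hUi : 0 < Ui) :
    Real.sqrt ((Ui / Ni) / (Uj / Nj)) = Real.sqrt (Nj / Uj) / Real.sqrt (Ni / Ui) := by
  rw [← Real.sqrt_div' _ (by positivity)]
  congr 1
  simp only [div_eq_mul_inv, mul_inv, inv_inv]
  ring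

/-- popularity-ratio bounds within an M-feasible partition. -/
theorem popularity_ratio_bounds
    (L K : ℕ) (hK : 1 ≤ K)
    (N U : Fin L → ℝ) (hN : ∀ i, 0 < N i) (hU : ∀ i, 0 < U i)
    (d : Fin L → ℕ) (hd1 : ∀ i, 1 ≤ d i) (hdK : ∀ i, d i ≤ K)
    (M : ℝ) (hM : 0 ≤ M)
    (H I J : Finset (Fin L)) (hfeas : MFeasible N U d K M H I J) :
    (∀ i ∈ I, ∀ j ∈ I,
      Real.sqrt ((U i / N i) / (U j / N j)) ≤ (K : ℝ) / (d i : ℝ) + 1) ∧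
    (∀ h ∈ H, ∀ i1 ∈ I,
      Mtilde N U d K M I J > (βls / (d i1 : ℝ) + 1 / (K : ℝ)) * Real.sqrt (N i1 / U i1) →
      Real.sqrt ((U i1 / N i1) / (U h / N h)) ≥ βls * (K : ℝ) / (d i1 : ℝ) + 1) := by
  have hK0 : (0 : ℝ) < K := by exact_mod_cast hK
  have hx : ∀ i, 0 < Real.sqrt (N i / U i) := fun i =>
    Real.sqrt_pos.mpr (div_pos (hN i) (hU i))
  -- Clearing the factor `1 / K` from a coefficient of the form `c / d + 1 / K`.
  have hscale : ∀ (c e x : ℝ), (c * K / e + 1) * x = K * ((c / e + 1 / K) * x) := by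
    intro c e x
    have : (K : ℝ) * (1 / K) = 1 := mul_one_div_cancel hK0.ne'
    linear_combination (-x) * this
  have hcancel : ∀ x : ℝ, (K : ℝ) * ((1 / K) * x) = x := by
    intro x
    field_simp
  refine ⟨fun i hi j hj => ?_, fun h hh i1 _ hlt => ?_⟩
  · rw [sqrt_popularity_ratio _ _ _ _ (hN i) (hU i), div_le_iff₀ (hx i), ← one_mul (K : ℝ),
      hscale, ← hcancel (Real.sqrt (N j / U j))]
    exact mul_le_mul_of_nonneg_left ((hfeas.memIlo j hj).trans (hfeas.memIhi i hi)) hK0.le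
  · rw [ge_iff_le, sqrt_popularity_ratio _ _ _ _ (hN i1) (hU i1), le_div_iff₀ (hx i1), hscale,
      ← hcancel (Real.sqrt (N h / U h))]
    exact mul_le_mul_of_nonneg_left (hlt.trans (hfeas.memH h hh)).le hK0.le
end

section
/- Assume regularity (R1) and K ≥ D/β. Let (H,I,J) be an M-feasible partition, let i₁ ∈ I satisfy M̃ > (β/d_{i₁} + 1/K)·√(N_{i₁}/U_{i₁}), and let h ∈ H. Define b = ⌈N_{i₁}/(d_{i₁}·U_{i₁})⌉ and s_h = ⌊2·β·K⌋. Then b·s_h² ≤ 4·D·N_h/U_h, and consequently min{ (s_h − d_h + 1)·U_h , N_h/(s_h·b) } ≥ (β/(4·D))·K·U_h. -/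
/-!
Write `x = N i1 / U i1`, `y = N h / U h`, `t = β K` and `δ = d i1`. Comparing the lower bound on
`M̃` at `i1` with its upper bound at `h` gives `(t / δ + 1) √x < √y`, hence
`(t + δ)² x ≤ δ² y` (`sq_gap`). Rounding costs `b ≤ x / δ + 1` and `sh ≤ 2 t`, and the extra
`4 t²` coming from the ceiling is absorbed by the cross term of `(t + δ)²`, because
`x ≥ K = 198 t` by (R1). This is the first bound.

For the second, `t ≥ D ≥ 1` and `sh > 2 t - 1` give both `sh - d h + 1 ≥ t` and `sh ≥ t`; the
first bound divided by `4 D b sh` then bounds `N h / (sh b)` below by `sh U h / (4 D)`.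
-/

open Finset

/-- The separation forced between a level `x = N i1 / U i1` in `I` that is not near the
bottom of its interval and a level `y = N h / U h` in `H`; here `m` stands for `M̃`. -/
lemma sq_gap {β k δ x y m : ℝ} (hβ : 0 < β) (hk : 0 < k) (hδ : 0 < δ) (hx : 0 ≤ x) (hy : 0 ≤ y)
    (h1 : (β / δ + 1 / k) * √x < m) (h2 : m < (1 / k) * √y) :
    (β * k + δ) ^ 2 * x ≤ δ ^ 2 * y := by
  have h3 : (β / δ + 1 / k) * √x ≤ (1 / k) * √y := (h1.trans h2).le
  have h4 : (β * k + δ) * √x ≤ δ * √y := by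
    have := mul_le_mul_of_nonneg_left h3 (mul_pos hδ hk).le
    have e1 : δ * k * ((β / δ + 1 / k) * √x) = (β * k + δ) * √x := by field_simp
    have e2 : δ * k * ((1 / k) * √y) = δ * √y := by field_simp
    rwa [e1, e2] at this
  have h5 := pow_le_pow_left₀ (by positivity) h4 2
  rwa [mul_pow, mul_pow, Real.sq_sqrt hx, Real.sq_sqrt hy] at h5

/-- The first bound, in terms of the two ratios `x`, `y` and `t = β K`. -/
lemma ceil_mul_floor_sq_le {t δ D x y b s : ℝ} (ht : 0 < t) (hδ : 0 < δ) (hδD : δ ≤ D)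
    (hx : 198 * t ≤ x) (hy : 0 ≤ y) (hgap : (t + δ) ^ 2 * x ≤ δ ^ 2 * y)
    (hb : b ≤ x / δ + 1) (hs0 : 0 ≤ s) (hs : s ≤ 2 * t) :
    b * s ^ 2 ≤ 4 * D * y := by
  have hx0 : 0 < x := by linarith
  have hs2 : s ^ 2 ≤ (2 * t) ^ 2 := pow_le_pow_left₀ hs0 hs 2
  have hpos : 0 ≤ x / δ + 1 := by positivity
  have h1 : b * s ^ 2 ≤ (x / δ + 1) * (2 * t) ^ 2 := mul_le_mul hb hs2 (by positivity) hpos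
  have h2 : (x / δ + 1) * (2 * t) ^ 2 ≤ 4 * δ * y := by
    have e : (x / δ + 1) * (2 * t) ^ 2 = (4 * t ^ 2 * (x + δ)) / δ := by field_simp; ring
    rw [e, div_le_iff₀ hδ]
    -- after clearing `δ`, the ceiling contributes `δ t²`, below the cross term `2 t δ x`
    have h3 : δ * t * t ≤ δ * t * x := by gcongr; linarith
    have h4 : 0 ≤ δ * t * x := by positivity
    have h5 : 0 ≤ δ ^ 2 * x := by positivity
    nlinarith
  have h6 : 4 * δ * y ≤ 4 * D * y := by gcongr
  linarith

/-- Case 2 bound for levels h ∈ H. -/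
theorem case2_H_bound
    (L K : ℕ) (hK : 1 ≤ K)
    (N U : Fin L → ℝ) (hN : ∀ i, 0 < N i) (hU : ∀ i, 0 < U i)
    (d : Fin L → ℕ) (hd1 : ∀ i, 1 ≤ d i) (hdK : ∀ i, d i ≤ K)
    (D : ℕ) (hD : D = Finset.univ.sup d)
    (hR1 : ∀ i, N i ≥ (K : ℝ) * U i)
    (hKD : (K : ℝ) ≥ (D : ℝ) / βls)
    (M : ℝ) (hM : 0 ≤ M)
    (H I J : Finset (Fin L)) (hfeas : MFeasible N U d K M H I J)
    (i1 : Fin L) (hi1 : i1 ∈ I)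
    (hI1 : Mtilde N U d K M I J >
      (βls / (d i1 : ℝ) + 1 / (K : ℝ)) * Real.sqrt (N i1 / U i1))
    (h : Fin L) (hh : h ∈ H)
    (b : ℤ) (hb : b = ⌈N i1 / ((d i1 : ℝ) * U i1)⌉)
    (sh : ℤ) (hsh : sh = ⌊2 * βls * (K : ℝ)⌋) :
    (b : ℝ) * (sh : ℝ) ^ 2 ≤ 4 * (D : ℝ) * N h / U h ∧
    min (((sh : ℝ) - (d h : ℝ) + 1) * U h) (N h / ((sh : ℝ) * (b : ℝ)))
      ≥ (βls / (4 * (D : ℝ))) * (K : ℝ) * U h := by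
  have hK0 : (0 : ℝ) < K := by exact_mod_cast hK
  have hdD : ∀ i, (d i : ℝ) ≤ D := fun i => by
    rw [hD]; exact_mod_cast Finset.le_sup (f := d) (Finset.mem_univ i)
  have hd1' : ∀ i, (1 : ℝ) ≤ d i := fun i => by exact_mod_cast hd1 i
  have hD1 : (1 : ℝ) ≤ D := (hd1' h).trans (hdD h)
  have hβ : (0 : ℝ) < βls := by norm_num [βls]
  have hKt : (K : ℝ) = 198 * (βls * K) := by unfold βls; ring
  have htD : (D : ℝ) ≤ βls * K := by
    rw [mul_comm]; exact (div_le_iff₀ hβ).1 hKD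
  have hδ : (0 : ℝ) < d i1 := by linarith [hd1' i1]
  have hx0 : 0 < N i1 / U i1 := div_pos (hN _) (hU _)
  have hy0 : 0 < N h / U h := div_pos (hN _) (hU _)
  have hxK : (K : ℝ) ≤ N i1 / U i1 := (le_div_iff₀ (hU i1)).2 (hR1 i1)
  have hgap := sq_gap hβ hK0 hδ hx0.le hy0.le hI1 (hfeas.memH h hh)
  have hs_le : (sh : ℝ) ≤ 2 * (βls * K) := by
    rw [hsh, ← mul_assoc]; exact Int.floor_le _
  have hs_gt : 2 * (βls * K) < (sh : ℝ) + 1 := by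
    rw [hsh, ← mul_assoc]; exact Int.lt_floor_add_one _
  have hxd : N i1 / ((d i1 : ℝ) * U i1) = N i1 / U i1 / d i1 := by
    rw [div_div, mul_comm]
  have hb_le : (b : ℝ) ≤ N i1 / U i1 / d i1 + 1 := by
    rw [hb, hxd]; exact (Int.ceil_lt_add_one _).le
  have hb0 : (0 : ℝ) < b := by
    rw [hb, hxd]; exact (div_pos hx0 hδ).trans_le (Int.le_ceil _)
  have ht0 : 0 < βls * K := mul_pos hβ hK0
  have hs_t : βls * K ≤ (sh : ℝ) := by linarith
  have hs0 : (0 : ℝ) < sh := by linarith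
  have key : (b : ℝ) * (sh : ℝ) ^ 2 ≤ 4 * D * (N h / U h) :=
    ceil_mul_floor_sq_le ht0 hδ (hdD i1) (by linarith) hy0.le hgap hb_le hs0.le hs_le
  have hUh := hU h
  refine ⟨by rwa [mul_div_assoc], le_min ?_ ?_⟩
  · refine mul_le_mul_of_nonneg_right ?_ hUh.le
    have h1 : βls / (4 * (D : ℝ)) * K = βls * K / (4 * D) := by ring
    have h2 : βls * K / (4 * (D : ℝ)) ≤ βls * K := div_le_self ht0.le (by linarith)
    linarith [hdD h]
  · rw [le_div_iff₀ (mul_pos hs0 hb0)]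
    have e : βls / (4 * (D : ℝ)) * K * U h * (sh * b)
        = (b * (sh * (βls * K))) * U h / (4 * D) := by ring
    rw [e, div_le_iff₀ (by linarith)]
    have h1 : (b : ℝ) * (sh * (βls * K)) ≤ 4 * D * (N h / U h) := by
      refine le_trans ?_ key
      rw [sq]; gcongr
    have h2 := mul_le_mul_of_nonneg_right h1 hUh.le
    have h3 : 4 * (D : ℝ) * (N h / U h) * U h = N h * (4 * D) := by field_simp
    linarith
end

section
/- Assume regularity (R1) and K ≥ D/β, and set γ₁ = 2.965, γ₂ = 0.482. Let (H,I,J) be an M-feasible partition, let i₁ ∈ I satisfy M̃ > (β/d_{i₁} + 1/K)·√(N_{i₁}/U_{i₁}) and U_i/N_i ≤ U_{i₁}/N_{i₁} for every i ∈ I, and let i ∈ I with i ≠ i₁ satisfy M̃ ≤ (β/d_i + 1/K)·√(N_i/U_i). Define b = ⌈N_{i₁}/(d_{i₁}·U_{i₁})⌉ and s_i = ⌊γ₁·β·√(N_i/U_i)/M̃ + γ₂·d_{i₁}·√((U_{i₁}/N_{i₁})/(U_i/N_i))⌋. Then min{ (s_i − d_i + 1)·U_i , N_i/(s_i·b) }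 ≥ (0.482·β/(12·(1+β)·D))·[ 2·√(N_i·U_i)/M̃ + (1/β)·d_{i₁}·U_{i₁}·√(N_i·U_i)/√(N_{i₁}·U_{i₁}) ]. -/
/-!
Write `x = √(N_i/U_i)`, `y = √(N_{i₁}/U_{i₁})`, `m = M̃`, `e = d_{i₁}`, and set `a = β x / m` and
`r = e x / y`. Then `s_i = ⌊γ₁ a + γ₂ r⌋`, and the right-hand side equals
`0.482 / (12 (1 + β) D) · (2 a + r) · U_i`.

Two inequalities carry the proof. Since `1/K ≤ β/D ≤ β/d_i`, the hypothesis that `m` is small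
relative to `x` gives `d_i ≤ 2 a`; the hypothesis that `m` is large relative to `y` gives `a ≤ r`.
The first term of the minimum is then at least `(γ₁ a + γ₂ r - d_i) U_i ≥ 0.482 (2 a + r) U_i`
(`first_term_bound`). For the second term, `y² ≥ K ≥ e / β` makes the ceiling cost only a factor
`1 + β`, that is `e b ≤ (1 + β) y²`, and with `a ≤ r` the quotient is at least a multiple of `r / e`
(`second_term_bound`).
-/

open Finset

/-- The bound on `(s - d + 1) U`, divided by `U`; here `γ₁ - 2 ≥ 2 γ₂` is what is used. -/
lemma first_term_bound {a r s d D : ℝ} (ha : 0 < a) (hr : 0 < r) (hD : 1 ≤ D)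
    (hda : d ≤ 2 * a) (hs : 2.965 * a + 0.482 * r < s + 1) :
    0.482 / (12 * (1 + 1 / 198) * D) * (2 * a + r) ≤ s - d + 1 := by
  have hc : 0.482 / (12 * (1 + 1 / 198) * D) ≤ 0.482 := by
    apply div_le_self <;> nlinarith
  have := mul_le_mul_of_nonneg_right hc (by positivity : 0 ≤ 2 * a + r)
  linarith

/-- The bound on `N / (s b)`, divided by `U`, where `x² = N / U`. -/
lemma second_term_bound {a r s b e x y D : ℝ} (ha : 0 < a) (har : a ≤ r) (hs : 0 < s)
    (hsu : s ≤ 2.965 * a + 0.482 * r) (hb : 0 < b) (he : 0 < e) (heD : e ≤ D) (hy : 0 < y)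
    (hbu : e * b ≤ (1 + 1 / 198) * y ^ 2) (hr : r * y = e * x) :
    0.482 / (12 * (1 + 1 / 198) * D) * (2 * a + r) ≤ x ^ 2 / (s * b) := by
  have hD : 0 < D := he.trans_le heD
  have hr0 : 0 < r := ha.trans_le har
  have hx : x = r * y / e := by
    rw [hr]
    field_simp
  rw [div_mul_eq_mul_div, div_le_div_iff₀ (by positivity) (by positivity)]
  have h1 : 0.482 * (2 * a + r) ≤ 1.446 * r := by linarith
  have h2 : s ≤ 3.447 * r := by linarith
  have h3 : b ≤ (1 + 1 / 198) * y ^ 2 / e := by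
    rw [le_div_iff₀ he]
    linarith
  calc 0.482 * (2 * a + r) * (s * b)
      ≤ 1.446 * r * (3.447 * r * ((1 + 1 / 198) * y ^ 2 / e)) := by gcongr
    _ = 1.446 * 3.447 * (1 + 1 / 198) * (r ^ 2 * y ^ 2 / e ^ 2) * e := by
        field_simp
    _ ≤ 12 * (1 + 1 / 198) * (r ^ 2 * y ^ 2 / e ^ 2) * D := by
        gcongr
        norm_num
    _ = x ^ 2 * (12 * (1 + 1 / 198) * D) := by
        rw [hx]
        ring

/-- Case 2 bound for levels i ∈ I other than i₁. -/
theorem case2_I_bound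
    (L K : ℕ) (hK : 1 ≤ K)
    (N U : Fin L → ℝ) (hN : ∀ i, 0 < N i) (hU : ∀ i, 0 < U i)
    (d : Fin L → ℕ) (hd1 : ∀ i, 1 ≤ d i) (hdK : ∀ i, d i ≤ K)
    (D : ℕ) (hD : D = Finset.univ.sup d)
    (hR1 : ∀ i, N i ≥ (K : ℝ) * U i)
    (hKD : (K : ℝ) ≥ (D : ℝ) / βls)
    (γ₁ γ₂ : ℝ) (hγ₁ : γ₁ = 2.965) (hγ₂ : γ₂ = 0.482)
    (M : ℝ) (hM : 0 ≤ M)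
    (H I J : Finset (Fin L)) (hfeas : MFeasible N U d K M H I J)
    (i1 : Fin L) (hi1 : i1 ∈ I)
    (hI1 : Mtilde N U d K M I J >
      (βls / (d i1 : ℝ) + 1 / (K : ℝ)) * Real.sqrt (N i1 / U i1))
    (hmax : ∀ i ∈ I, U i / N i ≤ U i1 / N i1)
    (i : Fin L) (hiI : i ∈ I) (hne : i ≠ i1)
    (hnotI1 : Mtilde N U d K M I J ≤
      (βls / (d i : ℝ) + 1 / (K : ℝ)) * Real.sqrt (N i / U i))
    (b : ℤ) (hb : b = ⌈N i1 / ((d i1 : ℝ) * U i1)⌉)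
    (si : ℤ) (hsi : si = ⌊γ₁ * βls * Real.sqrt (N i / U i) / Mtilde N U d K M I J +
      γ₂ * (d i1 : ℝ) * Real.sqrt ((U i1 / N i1) / (U i / N i))⌋) :
    min (((si : ℝ) - (d i : ℝ) + 1) * U i) (N i / ((si : ℝ) * (b : ℝ)))
      ≥ (0.482 * βls / (12 * (1 + βls) * (D : ℝ))) *
          (2 * Real.sqrt (N i * U i) / Mtilde N U d K M I J +
            (1 / βls) * (d i1 : ℝ) * U i1 *
              Real.sqrt (N i * U i) / Real.sqrt (N i1 * U i1)) := by
  have hNi := hN i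
  have hUi := hU i
  have hN1 := hN i1
  have hU1 := hU i1
  have hlo := hfeas.memIlo i hiI
  generalize Mtilde N U d K M I J = m at *
  have hKpos : (0 : ℝ) < K := by exact_mod_cast hK
  have hdi : (1 : ℝ) ≤ d i := by exact_mod_cast hd1 i
  have he : (1 : ℝ) ≤ d i1 := by exact_mod_cast hd1 i1
  have hdD : (d i : ℝ) ≤ D := by
    rw [hD]
    exact_mod_cast Finset.le_sup (f := d) (Finset.mem_univ i)
  have heD : (d i1 : ℝ) ≤ D := by
    rw [hD]
    exact_mod_cast Finset.le_sup (f := d) (Finset.mem_univ i1)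
  have hDpos : (0 : ℝ) < D := by linarith
  have hKD' : 198 * (D : ℝ) ≤ K := by
    simp only [βls] at hKD
    linarith
  -- Every square root in the statement is expressed through `x` and `y`.
  obtain ⟨x, hx⟩ : ∃ x, x = Real.sqrt (N i / U i) := ⟨_, rfl⟩
  obtain ⟨y, hy⟩ : ∃ y, y = Real.sqrt (N i1 / U i1) := ⟨_, rfl⟩
  have hx0 : 0 < x := hx ▸ Real.sqrt_pos.mpr (by positivity)
  have hy0 : 0 < y := hy ▸ Real.sqrt_pos.mpr (by positivity)
  have hx2 : x ^ 2 = N i / U i := by rw [hx, Real.sq_sqrt (by positivity)]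
  have hy2 : y ^ 2 = N i1 / U i1 := by rw [hy, Real.sq_sqrt (by positivity)]
  have hNx : N i = x ^ 2 * U i := by
    rw [hx2]
    field_simp
  have hNy : N i1 = y ^ 2 * U i1 := by
    rw [hy2]
    field_simp
  have hs1 : Real.sqrt (N i * U i) = x * U i := by
    rw [hNx, show x ^ 2 * U i * U i = (x * U i) ^ 2 by ring, Real.sqrt_sq (by positivity)]
  have hs2 : Real.sqrt (N i1 * U i1) = y * U i1 := by
    rw [hNy, show y ^ 2 * U i1 * U i1 = (y * U i1) ^ 2 by ring, Real.sqrt_sq (by positivity)]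
  have hs3 : Real.sqrt ((U i1 / N i1) / (U i / N i)) = x / y := by
    rw [hNx, hNy, show (U i1 / (y ^ 2 * U i1)) / (U i / (x ^ 2 * U i)) = (x / y) ^ 2 by
      field_simp, Real.sqrt_sq (by positivity)]
  rw [hs1, hs2]
  rw [hs3, ← hx, hγ₁, hγ₂] at hsi
  rw [← hx] at hlo hnotI1
  rw [← hy] at hI1
  simp only [βls] at hI1 hnotI1 hsi ⊢
  have hm0 : 0 < m := lt_of_lt_of_le (by positivity) hlo
  obtain ⟨a, ha⟩ : ∃ a, a = 1 / 198 * x / m := ⟨_, rfl⟩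
  obtain ⟨r, hr⟩ : ∃ r, r = (d i1 : ℝ) * x / y := ⟨_, rfl⟩
  have ha0 : 0 < a := by
    rw [ha]
    positivity
  have hr0 : 0 < r := by
    rw [hr]
    positivity
  have hda : (d i : ℝ) ≤ 2 * a := by
    have hK' : 1 / (K : ℝ) ≤ 1 / 198 / d i := by
      rw [div_div]
      exact one_div_le_one_div_of_le (by positivity) (by linarith)
    have h1 : m ≤ (1 / 198 / d i + 1 / 198 / d i) * x := hnotI1.trans (by gcongr)
    have h2 : m * d i ≤ 2 * (1 / 198 * x) := by
      calc m * d i ≤ (1 / 198 / d i + 1 / 198 / d i) * x * d i := by gcongr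
        _ = 2 * (1 / 198 * x) := by
          field_simp
          norm_num
    rw [ha, ← mul_div_assoc, le_div_iff₀ hm0]
    linarith
  have har : a ≤ r := by
    have h1 : 1 / 198 / d i1 * y ≤ m := by
      refine le_trans ?_ hI1.le
      gcongr
      exact le_add_of_nonneg_right (by positivity)
    have h2 : 1 / 198 * y ≤ d i1 * m := by
      calc 1 / 198 * y = d i1 * (1 / 198 / d i1 * y) := by field_simp
        _ ≤ d i1 * m := by gcongr
    rw [ha, hr, div_le_div_iff₀ hm0 hy0]
    nlinarith
  have harg : 2.965 * (1 / 198) * x / m + 0.482 * (d i1 : ℝ) * (x / y)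
      = 2.965 * a + 0.482 * r := by
    rw [ha, hr]
    ring
  rw [harg] at hsi
  have hsu : (si : ℝ) ≤ 2.965 * a + 0.482 * r := hsi ▸ Int.floor_le _
  have hsl : 2.965 * a + 0.482 * r < (si : ℝ) + 1 := hsi ▸ Int.lt_floor_add_one _
  have hs0 : (0 : ℝ) < si := by linarith
  have hbarg : N i1 / ((d i1 : ℝ) * U i1) = y ^ 2 / d i1 := by
    rw [hNy]
    field_simp
  rw [hbarg] at hb
  have hb0 : (0 : ℝ) < b :=
    lt_of_lt_of_le (by positivity : (0 : ℝ) < y ^ 2 / d i1) (hb ▸ Int.le_ceil _)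
  have hyK : (K : ℝ) ≤ y ^ 2 := by
    rw [hy2, le_div_iff₀ hU1]
    exact hR1 i1
  have hbu : (d i1 : ℝ) * b ≤ (1 + 1 / 198) * y ^ 2 := by
    have h1 : (b : ℝ) < y ^ 2 / d i1 + 1 := hb ▸ Int.ceil_lt_add_one _
    have h2 : (d i1 : ℝ) * b ≤ d i1 * (y ^ 2 / d i1 + 1) := by gcongr
    have h3 : (d i1 : ℝ) * (y ^ 2 / d i1 + 1) = y ^ 2 + d i1 := by field_simp
    linarith
  have hrhs : (0.482 * (1 / 198) / (12 * (1 + 1 / 198) * (D : ℝ))) *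
      (2 * (x * U i) / m + (1 / (1 / 198)) * (d i1 : ℝ) * U i1 * (x * U i) / (y * U i1))
      = 0.482 / (12 * (1 + 1 / 198) * (D : ℝ)) * (2 * a + r) * U i := by
    rw [ha, hr]
    field_simp
  rw [hrhs, ge_iff_le, le_min_iff]
  constructor
  · exact mul_le_mul_of_nonneg_right
      (first_term_bound ha0 hr0 (by linarith) hda hsl) hUi.le
  · rw [hNx, mul_div_right_comm]
    refine mul_le_mul_of_nonneg_right
      (second_term_bound ha0 har hs0 hsu hb0 (by linarith) heD hy0 hbu ?_) hUi.le
    rw [hr]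
    field_simp
end

section
/- Let M, N, K be real numbers with M ≥ 1/6, K ≥ 6, and M < N/K. Then ⌈K/6⌉·( min{ 1 , N/(⌈K/6⌉·⌈6M⌉) } − M/⌈6M⌉ ) ≥ K/72. -/
/-- the single-user converse bound for a level h ∈ H. -/
theorem su_bound_H (M N K : ℝ) (hM : M ≥ 1 / 6) (hK : K ≥ 6) (hMN : M < N / K) :
    (⌈K / 6⌉ : ℝ) * (min 1 (N / ((⌈K / 6⌉ : ℝ) * (⌈6 * M⌉ : ℝ))) - M / (⌈6 * M⌉ : ℝ))
      ≥ K / 72 := by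
  have ha1 := Int.le_ceil (K / 6)
  have ha2 := Int.ceil_lt_add_one (K / 6)
  have hb1 := Int.le_ceil (6 * M)
  have hb2 := Int.ceil_lt_add_one (6 * M)
  generalize (⌈K / 6⌉ : ℝ) = a at *
  generalize (⌈6 * M⌉ : ℝ) = b at *
  have ha : 0 < a := by linarith
  have hb : 0 < b := by linarith
  have hKM : M * K < N := (lt_div_iff₀ (by linarith)).1 hMN
  rcases le_total 1 (N / (a * b)) with h | h
  · -- The first term of the minimum is active: `M / b ≤ 1 / 6` and `a ≥ K / 6`.
    rw [min_eq_left h]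
    have h1 : M / b ≤ 1 / 6 := by rw [div_le_iff₀ hb]; linarith
    nlinarith
  · -- The second term is active: the bound is `(N - a * M) / b ≥ (M / b) * (K - a)`,
    -- where `M / b ≥ 1 / 12` because `b < 6 * M + 1 ≤ 12 * M`, and `K - a ≥ 2 * K / 3`.
    rw [min_eq_right h]
    have e : a * (N / (a * b) - M / b) = (N - a * M) / b := by field_simp
    rw [e, ge_iff_le, le_div_iff₀ hb]
    have h1 : K * b ≤ K * (12 * M) := by
      apply mul_le_mul_of_nonneg_left <;> linarith
    have h2 : M * a ≤ M * (K / 3) := by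
      apply mul_le_mul_of_nonneg_left <;> linarith
    have h3 : 0 ≤ M * K := by apply mul_nonneg <;> linarith
    linarith
end

section
/- Let M and N be real numbers with M ≥ 1/6 and N ≥ 6·M. Then ⌈N/(6M)⌉·( min{ 1 , N/(⌈N/(6M)⌉·⌈6M⌉) } − M/⌈6M⌉ ) ≥ N/(72·M). -/
/-!
Put `x = 6M ≥ 1`, `y = N / x ≥ 1`, `a = ⌈y⌉`, `c = ⌈x⌉`, so that `y ≤ a ≤ 2y` and `x ≤ c ≤ 2x`.
The target is `y / 12`. If the minimum is `1`, the left side is `a (1 - x / (6c)) ≥ 5y / 6`;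
otherwise it is `(x y - a x / 6) / c ≥ (2/3) x y / c ≥ y / 3`.
-/

/-- the single-user converse bound for a level i ∈ I. -/
theorem su_bound_I (M N : ℝ) (hM : M ≥ 1 / 6) (hN : N ≥ 6 * M) :
    (⌈N / (6 * M)⌉ : ℝ) *
        (min 1 (N / ((⌈N / (6 * M)⌉ : ℝ) * (⌈6 * M⌉ : ℝ))) - M / (⌈6 * M⌉ : ℝ))
      ≥ N / (72 * M) := by
  have hM0 : 0 < M := by linarith
  have hy : 1 ≤ N / (6 * M) := by
    rw [le_div_iff₀ (by positivity)]; linarith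
  have hNy : N = N / (6 * M) * (6 * M) := by field_simp
  have htarget : N / (72 * M) = N / (6 * M) / 12 := by
    field_simp; ring
  have ha1 := Int.le_ceil (N / (6 * M))
  have ha2 := Int.ceil_lt_add_one (N / (6 * M))
  have hc1 := Int.le_ceil (6 * M)
  have hc2 := Int.ceil_lt_add_one (6 * M)
  rw [htarget]
  generalize (⌈N / (6 * M)⌉ : ℝ) = a at *
  generalize (⌈6 * M⌉ : ℝ) = c at *
  generalize N / (6 * M) = y at *
  have ha0 : 0 < a := by linarith
  have hc0 : 0 < c := by linarith
  rcases min_choice 1 (N / (a * c)) with h | h <;> rw [h]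
  · have h6 : M / c ≤ 1 / 6 := by
      rw [div_le_iff₀ hc0]; linarith
    nlinarith
  · have e : a * (N / (a * c) - M / c) = (N - a * M) / c := by
      field_simp
    rw [e, ge_iff_le, le_div_iff₀ hc0, hNy]
    have h1 : y * c ≤ y * (12 * M) := mul_le_mul_of_nonneg_left (by linarith) (by linarith)
    have h2 : a * M ≤ 2 * y * M := mul_le_mul_of_nonneg_right (by linarith) hM0.le
    have h3 : 0 < y * M := mul_pos (by linarith) hM0
    linarith
end

section
/- Let M and N be real numbers with 1/6 ≤ M and 6·M < N. Then ( N − ⌈N/(6M)⌉·M ) / ⌈6M⌉ ≥ N/(18·M). (This is the corrected form of the paper's bound on the term v_J in the regime M < N_J/6; the paper's derivation yields the constant 1/18.) -/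
/-- the (corrected) single-user converse bound for the set J when M < N/6. -/
theorem su_bound_J_small (M N : ℝ) (hM : 1 / 6 ≤ M) (hN : 6 * M < N) :
    (N - (⌈N / (6 * M)⌉ : ℝ) * M) / (⌈6 * M⌉ : ℝ) ≥ N / (18 * M) := by
  have hM0 : 0 < M := by linarith
  have hN0 : 0 < N := by linarith
  -- `⌈x⌉ < x + 1` gives `⌈N / (6M)⌉ * M ≤ N / 6 + M ≤ N / 3`.
  have hnum : 2 * N / 3 ≤ N - (⌈N / (6 * M)⌉ : ℝ) * M := by
    have h := mul_le_mul_of_nonneg_right (Int.ceil_lt_add_one (N / (6 * M))).le hM0.le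
    have e : (N / (6 * M) + 1) * M = N / 6 + M := by field_simp
    linarith
  -- Since `6M ≥ 1`, rounding up at most doubles `6M`.
  have hden : (⌈6 * M⌉ : ℝ) ≤ 12 * M := by
    linarith [Int.ceil_lt_add_one (6 * M)]
  have hden0 : (0 : ℝ) < (⌈6 * M⌉ : ℝ) := by
    linarith [Int.le_ceil (6 * M)]
  calc N / (18 * M) = (2 * N / 3) / (12 * M) := by field_simp; norm_num
    _ ≤ (N - (⌈N / (6 * M)⌉ : ℝ) * M) / (⌈6 * M⌉ : ℝ) :=
      div_le_div₀ (by linarith) hnum hden0 hden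
end
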